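/- Let d ≥ 1, −1 < a < 1, r ≥ 2 and q > 2 with 2/q + d/r = (d+a+1)/2. Then there exists C = C(d,a,r) > 0 such that for every Φ ∈ 𝒮(ℝ^{d+1}): (i) sup_{t∈ℝ} ‖Θ_a^*(Φ)(·,t)‖_{L²_a(ℝ^{d+1}_+)} ≤ C·‖Φ‖_{L^{q'}_tL^{r'}_x}; and (ii) sup_{z>0} ‖Θ_a^*(Φ)(·,z,·)‖_{L^q_tL^r_x} ≤ C·‖Φ‖_{L^{q'}_tL^{r'}_x}. -/

import Mathlib

open MeasureTheory Filter Complex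
open scoped ENNReal NNReal Topology

noncomputable section

/-- Bessel function of the first kind of order `ν`, via its power series. -/
def besselJ (ν : ℝ) (x : ℝ) : ℝ :=
  ∑' k : ℕ, ((-1 : ℝ) ^ k / ((k.factorial : ℝ) * Real.Gamma ((k : ℝ) + ν + 1))) *
    (x / 2) ^ (2 * (k : ℝ) + ν)

/-- The half-line Schrödinger–Bessel kernel `S_a(z,ζ,t)`. -/
def SaK (a : ℝ) (z ζ t : ℝ) : ℂ :=
  (Complex.exp (-Complex.I * ((Real.sign t : ℝ) : ℂ) * (((a + 1) * Real.pi / 4 : ℝ) : ℂ)) /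
      (((2 * |t|) ^ ((a + 1) / 2) : ℝ) : ℂ)) *
    (((z * ζ / (2 * |t|)) ^ ((1 - a) / 2) : ℝ) : ℂ) *
    ((besselJ ((a - 1) / 2) (z * ζ / (2 * |t|)) : ℝ) : ℂ) *
    Complex.exp (Complex.I * ((z ^ 2 + ζ ^ 2 : ℝ) : ℂ) / ((4 * t : ℝ) : ℂ))

/-- The boundary kernel `S_a(z,0,t)`. -/
def Sa0 (a : ℝ) (z t : ℝ) : ℂ :=
  ((((2 : ℝ) ^ (-a) / Real.Gamma ((a + 1) / 2) : ℝ)) : ℂ) *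
    Complex.exp (-Complex.I * ((Real.sign t : ℝ) : ℂ) * (((a + 1) * Real.pi / 4 : ℝ) : ℂ)) *
    (((|t| ^ (-((a + 1) / 2)) : ℝ)) : ℂ) *
    Complex.exp (Complex.I * ((z ^ 2 : ℝ) : ℂ) / ((4 * t : ℝ) : ℂ))

/-- The free Schrödinger kernel on `ℝ^d` (principal branch of the power). -/
def Sfree (d : ℕ) (x y : Fin d → ℝ) (t : ℝ) : ℂ :=
  (4 * (Real.pi : ℂ) * Complex.I * (t : ℂ)) ^ (-(d : ℂ) / 2) *
    Complex.exp (Complex.I * ((∑ i, (x i - y i) ^ 2 : ℝ) : ℂ) / ((4 * t : ℝ) : ℂ))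

/-- The full half-space kernel `𝕊_a(X,Y,t) = S_a(z,ζ,t)·S(x,y,t)`. -/
def SK (d : ℕ) (a : ℝ) (X Y : (Fin d → ℝ) × ℝ) (t : ℝ) : ℂ :=
  SaK a X.2 Y.2 t * Sfree d X.1 Y.1 t

/-- The weighted measure `dω_a = z^a dx dz` on the half-space `ℝ^d × (0,∞)`. -/
def ωa (d : ℕ) (a : ℝ) : Measure ((Fin d → ℝ) × ℝ) :=
  (volume : Measure (Fin d → ℝ)).prod
    (((volume : Measure ℝ).restrict (Set.Ioi 0)).withDensity fun z => ENNReal.ofReal (z ^ a))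

/-- The mixed norm `‖Φ‖_{L^q_t L^r_x}`. -/
def mixNorm (d : ℕ) (q r : ℝ) (Φ : (Fin d → ℝ) → ℝ → ℂ) : ℝ≥0∞ :=
  (∫⁻ t : ℝ, (∫⁻ x : Fin d → ℝ, (‖Φ x t‖₊ : ℝ≥0∞) ^ r) ^ (q / r)) ^ (1 / q)

/-- The mixed norm `‖Φ‖_{L^q_T L^r_x}` over the time interval `[0,T]`. -/
def mixNormT (d : ℕ) (T q r : ℝ) (Φ : (Fin d → ℝ) → ℝ → ℂ) : ℝ≥0∞ :=
  (∫⁻ t in Set.Ioc (0 : ℝ) T, (∫⁻ x : Fin d → ℝ, (‖Φ x t‖₊ : ℝ≥0∞) ^ r) ^ (q / r)) ^ (1 / q)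

/-- The homogeneous propagator `𝕋_a^*(u₀)`. -/
def Tstar (d : ℕ) (a : ℝ) (u₀ : (Fin d → ℝ) × ℝ → ℂ) (X : (Fin d → ℝ) × ℝ) (t : ℝ) : ℂ :=
  if t = 0 then u₀ X else ∫ Y, SK d a X Y t * u₀ Y ∂(ωa d a)

/-- The inhomogeneous Duhamel term `𝔻_a(F)`. -/
def Dop (d : ℕ) (a : ℝ) (F : (Fin d → ℝ) × ℝ → ℝ → ℂ) (X : (Fin d → ℝ) × ℝ) (t : ℝ) : ℂ :=
  ∫ τ in (0 : ℝ)..t, ∫ Y, SK d a X Y (t - τ) * F Y τ ∂(ωa d a)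

/-- The boundary-data operator `Θ_a^*(Φ)`. -/
def ThetaStar (d : ℕ) (a : ℝ) (Φ : (Fin d → ℝ) → ℝ → ℂ) (X : (Fin d → ℝ) × ℝ) (t : ℝ) : ℂ :=
  Complex.I *
    ∫ τ in (0 : ℝ)..t, ∫ y : Fin d → ℝ, Sa0 a X.2 (t - τ) * Sfree d X.1 y (t - τ) * Φ y τ

/-- The weight `k(z) = min{1, z^{a/2}}`. -/
def kwt (a z : ℝ) : ℝ := min 1 (z ^ (a / 2))

/-- The weight `k^{-1}(z) = max{1, z^{-a/2}}`. -/
def kinv (a z : ℝ) : ℝ := max 1 (z ^ (-a / 2))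

/-!
Interpolating the `L¹ → L^∞` bound of the kernel with the `L²` contraction gives the free
propagator the decay `|t|^{-d(1/2 - 1/r)}` from `L^{r'}` to `L^r`. The vertical factor `S_a(z,0,t)`
contributes a further `|t|^{-(a+1)/2}`, and admissibility says precisely that the two exponents add
up to `2/q`.

For the trace estimate, Minkowski's inequality in `x` reduces the claim to the
Hardy–Littlewood–Sobolev inequality in time for the kernel `|t - τ|^{-2/q}`. For the energy
estimate, the square of the `L²_a` norm is, by the `TT*` argument, a double integral in `(τ, τ')` of
inner products of two propagated data; their vertical and horizontal factors decay like
`|τ - τ'|^{-(a+1)/2}` and `|τ - τ'|^{-d(1/2 - 1/r)}`, so the bilinear form of the same inequality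
applies. These inner products converge only conditionally, hence the Gaussian weight
`e^{-δ(|x|² + z²)}`: all bounds are uniform in `δ`, and Fatou's lemma removes it.
-/

section LayerCake

theorem setLIntegral_Ioi_rpow_eq_top (s : ℝ) :
    ∫⁻ l in Set.Ioi (0 : ℝ), ENNReal.ofReal (l ^ s) = ⊤ := by
  by_contra h
  refine not_integrableOn_Ioi_rpow s ⟨by fun_prop, ?_⟩
  rw [hasFiniteIntegral_iff_ofReal]
  · exact Ne.lt_top h
  · filter_upwards [self_mem_ae_restrict measurableSet_Ioi] with l hl using Real.rpow_nonneg hl.le _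

theorem setLIntegral_Ioo_rpow {s x : ℝ} (hs : 0 < s) (hx : 0 ≤ x) :
    ∫⁻ l in Set.Ioo 0 x, ENNReal.ofReal (l ^ (s - 1)) = ENNReal.ofReal (x ^ s / s) := by
  have hint :=
    intervalIntegral.intervalIntegrable_rpow' (a := 0) (b := x) (r := s - 1) (by linarith)
  rw [intervalIntegrable_iff_integrableOn_Ioc_of_le hx] at hint
  rw [restrict_Ioo_eq_restrict_Ioc, ← ofReal_integral_eq_lintegral_ofReal hint,
    ← intervalIntegral.integral_of_le hx, integral_rpow (Or.inl (by linarith)), sub_add_cancel,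
    Real.zero_rpow hs.ne', sub_zero]
  filter_upwards [self_mem_ae_restrict measurableSet_Ioc] with l hl using Real.rpow_nonneg hl.1.le _

theorem lintegral_indicator_lt_rpow {s : ℝ} (hs : 0 < s) (x : ℝ≥0∞) :
    ∫⁻ l in Set.Ioi (0 : ℝ),
      {l : ℝ | ENNReal.ofReal l < x}.indicator (fun l => ENNReal.ofReal (l ^ (s - 1))) l
      = ENNReal.ofReal s⁻¹ * x ^ s := by
  induction x with
  | top =>
    simp only [ENNReal.ofReal_lt_top, Set.ofPred_true, Set.indicator_univ]
    rw [setLIntegral_Ioi_rpow_eq_top, ENNReal.top_rpow_of_pos hs,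
      ENNReal.mul_top (by simpa using hs)]
  | coe x =>
    have hind : ∀ l ∈ Set.Ioi (0 : ℝ),
        {l : ℝ | ENNReal.ofReal l < x}.indicator (fun l => ENNReal.ofReal (l ^ (s - 1))) l
          = (Set.Iio (x : ℝ)).indicator (fun l => ENNReal.ofReal (l ^ (s - 1))) l := fun l hl => by
      simp only [Set.indicator_apply, Set.mem_ofPred_eq, ENNReal.ofReal_lt_coe_iff (le_of_lt hl),
        Set.mem_Iio]
    rw [setLIntegral_congr_fun measurableSet_Ioi hind, lintegral_indicator measurableSet_Iio,
      Measure.restrict_restrict measurableSet_Iio, Set.Iio_inter_Ioi,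
      setLIntegral_Ioo_rpow hs x.coe_nonneg, div_eq_inv_mul, ENNReal.ofReal_mul (by positivity),
      ← ENNReal.ofReal_rpow_of_nonneg x.coe_nonneg hs.le, ENNReal.ofReal_coe_nnreal]

variable {α β : Type*} [MeasurableSpace α] [MeasurableSpace β] {μ : Measure α} {ν : Measure β}

theorem lintegral_rpow_mul_eq_lintegral_lt [SFinite μ] {φ w : α → ℝ≥0∞} (hφ : AEMeasurable φ μ)
    (hw : AEMeasurable w μ) {s : ℝ} (hs : 0 < s) :
    ∫⁻ l in Set.Ioi (0 : ℝ), ENNReal.ofReal (l ^ (s - 1)) *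
        ∫⁻ x, {x | ENNReal.ofReal l < φ x}.indicator w x ∂μ
      = ENNReal.ofReal s⁻¹ * ∫⁻ x, φ x ^ s * w x ∂μ := by
  have hmeas : AEMeasurable (fun p : ℝ × α => {p : ℝ × α | ENNReal.ofReal p.1 < φ p.2}.indicator
      (fun p => ENNReal.ofReal (p.1 ^ (s - 1)) * w p.2) p)
      ((volume.restrict (Set.Ioi 0)).prod μ) :=
    (AEMeasurable.mul (by fun_prop) hw.comp_snd).indicator₀
      (nullMeasurableSet_lt (by fun_prop) hφ.comp_snd)
  have hcut : ∀ l x, ENNReal.ofReal (l ^ (s - 1)) * {x | ENNReal.ofReal l < φ x}.indicator w x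
      = {p : ℝ × α | ENNReal.ofReal p.1 < φ p.2}.indicator
          (fun p => ENNReal.ofReal (p.1 ^ (s - 1)) * w p.2) (l, x) := fun l x => by
    simp only [Set.indicator_apply, Set.mem_ofPred_eq, mul_ite, mul_zero]
  have hcut' : ∀ l x, {p : ℝ × α | ENNReal.ofReal p.1 < φ p.2}.indicator
        (fun p => ENNReal.ofReal (p.1 ^ (s - 1)) * w p.2) (l, x)
      = {l : ℝ | ENNReal.ofReal l < φ x}.indicator (fun l => ENNReal.ofReal (l ^ (s - 1))) l
        * w x := fun l x => by
    simp only [Set.indicator_apply, Set.mem_ofPred_eq, ite_mul, zero_mul]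
  simp_rw [← lintegral_const_mul' _ _ ENNReal.ofReal_ne_top, hcut]
  rw [lintegral_lintegral_swap hmeas]
  refine lintegral_congr fun x => ?_
  simp_rw [hcut']
  rw [lintegral_mul_const _ (Measurable.indicator (by fun_prop)
      (measurableSet_lt (by fun_prop) measurable_const)), lintegral_indicator_lt_rpow hs, mul_assoc]

theorem lintegral_rpow_le_of_distribution_le [SFinite μ] [SFinite ν] {H : β → ℝ≥0∞}
    {φ w : α → ℝ≥0∞} (hH : AEMeasurable H ν) (hφ : AEMeasurable φ μ) (hw : AEMeasurable w μ)
    {s q : ℝ} (hs : 0 ≤ s) (hsq : s < q) {A : ℝ≥0∞} (hA : A ≠ ⊤)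
    (hdist : ∀ l : ℝ, 0 < l → ν {y | ENNReal.ofReal l < H y}
      ≤ A * ENNReal.ofReal (l ^ (-s)) * ∫⁻ x, {x | ENNReal.ofReal l < φ x}.indicator w x ∂μ) :
    ∫⁻ y, H y ^ q ∂ν ≤ ENNReal.ofReal (q / (q - s)) * A * ∫⁻ x, φ x ^ (q - s) * w x ∂μ := by
  have hq : 0 < q := hs.trans_lt hsq
  have hlevel : ∀ l : ℝ, ∫⁻ y, {y | ENNReal.ofReal l < H y}.indicator 1 y ∂ν
      = ν {y | ENNReal.ofReal l < H y} := fun l =>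
    lintegral_indicator_one₀ (nullMeasurableSet_lt aemeasurable_const hH)
  have hpow : ∀ l : ℝ, 0 < l →
      ENNReal.ofReal (l ^ (q - 1)) * ν {y | ENNReal.ofReal l < H y}
        ≤ A * (ENNReal.ofReal (l ^ (q - s - 1)) *
            ∫⁻ x, {x | ENNReal.ofReal l < φ x}.indicator w x ∂μ) := fun l hl => by
    refine (mul_le_mul_right (hdist l hl) _).trans_eq ?_
    rw [show q - s - 1 = q - 1 + -s by ring, Real.rpow_add hl, ENNReal.ofReal_mul (by positivity)]
    ring
  calc ∫⁻ y, H y ^ q ∂ν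
      = ENNReal.ofReal q * ∫⁻ l in Set.Ioi (0 : ℝ),
          ENNReal.ofReal (l ^ (q - 1)) * ν {y | ENNReal.ofReal l < H y} := by
        have h := lintegral_rpow_mul_eq_lintegral_lt (w := 1) hH aemeasurable_const hq
        simp only [Pi.one_apply, mul_one, hlevel] at h
        rw [h, ← mul_assoc, ← ENNReal.ofReal_mul hq.le, mul_inv_cancel₀ hq.ne', ENNReal.ofReal_one,
          one_mul]
    _ ≤ ENNReal.ofReal q * ∫⁻ l in Set.Ioi (0 : ℝ), A * (ENNReal.ofReal (l ^ (q - s - 1)) *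
          ∫⁻ x, {x | ENNReal.ofReal l < φ x}.indicator w x ∂μ) := by
        gcongr ENNReal.ofReal q * ?_
        exact setLIntegral_mono' measurableSet_Ioi hpow
    _ = ENNReal.ofReal (q / (q - s)) * A * ∫⁻ x, φ x ^ (q - s) * w x ∂μ := by
        rw [lintegral_const_mul' _ _ hA, lintegral_rpow_mul_eq_lintegral_lt hφ hw (sub_pos.2 hsq),
          div_eq_mul_inv, ENNReal.ofReal_mul hq.le]
        ring

end LayerCake

section HardyLittlewoodSobolev

section Convolution

variable {G : Type*} [AddCommGroup G] [MeasurableSpace G] [MeasurableAdd₂ G] [MeasurableNeg G]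
  {μ : Measure G} [SFinite μ] [μ.IsAddLeftInvariant]

theorem lintegral_lintegral_sub_mul {k f : G → ℝ≥0∞} (hk : Measurable k) (hf : Measurable f) :
    ∫⁻ t, ∫⁻ s, k (t - s) * f s ∂μ ∂μ = (∫⁻ s, k s ∂μ) * ∫⁻ s, f s ∂μ := by
  rw [lintegral_lintegral_swap (by fun_prop), ← lintegral_const_mul _ hf]
  refine lintegral_congr fun s => ?_
  rw [lintegral_mul_const _ (by fun_prop), lintegral_sub_right_eq_self]

theorem measure_convolution_gt_le [μ.IsNegInvariant] {p p' : ℝ} (hp : p.HolderConjugate p')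
    {k₁ k₂ f : G → ℝ≥0∞} (hk₁ : Measurable k₁) (hk₂ : Measurable k₂) (hf : Measurable f)
    {l c : ℝ≥0∞} (hl : l ≠ 0) (hl' : l ≠ ⊤) (h₁ : (∫⁻ s, k₁ s ∂μ) * c ≤ l / 2 / 2)
    (h₂ : (∫⁻ s, k₂ s ^ p' ∂μ) ^ (1 / p') * (∫⁻ s, f s ^ p ∂μ) ^ (1 / p) ≤ l / 2 / 2) :
    μ {t | l < ∫⁻ s, (k₁ (t - s) + k₂ (t - s)) * f s ∂μ}
      ≤ ((∫⁻ s, k₁ s ∂μ) * ∫⁻ s, {s | c < f s}.indicator f s ∂μ) / (l / 2) := by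
  have hset : MeasurableSet {s | c < f s} := measurableSet_lt measurable_const hf
  set f₁ := {s | c < f s}.indicator f with hf₁
  have hf₁m : Measurable f₁ := hf.indicator hset
  have hf_le : ∀ s, f s ≤ f₁ s + c := fun s => by
    by_cases hs : s ∈ {s | c < f s}
    · simp only [hf₁, Set.indicator_of_mem hs, le_self_add]
    · simpa only [hf₁, Set.indicator_of_notMem hs, zero_add] using not_lt.1 hs
  have hsmall : ∀ t, ∫⁻ s, k₁ (t - s) * c ∂μ ≤ l / 2 / 2 := fun t => by
    rwa [lintegral_mul_const _ (by fun_prop), lintegral_sub_left_eq_self k₁ t]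
  have htail : ∀ t, ∫⁻ s, k₂ (t - s) * f s ∂μ ≤ l / 2 / 2 := fun t => by
    refine (ENNReal.lintegral_mul_le_Lp_mul_Lq μ hp.symm (by fun_prop) hf.aemeasurable).trans ?_
    rwa [lintegral_sub_left_eq_self (fun s => k₂ s ^ p') t]
  have hsplit : ∀ t, ∫⁻ s, (k₁ (t - s) + k₂ (t - s)) * f s ∂μ
      ≤ ∫⁻ s, k₁ (t - s) * f₁ s ∂μ + (l / 2 / 2 + l / 2 / 2) := fun t => by
    calc ∫⁻ s, (k₁ (t - s) + k₂ (t - s)) * f s ∂μ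
        ≤ ∫⁻ s, (k₁ (t - s) * f₁ s + (k₁ (t - s) * c + k₂ (t - s) * f s)) ∂μ := by
          gcongr with s
          rw [add_mul, ← add_assoc, ← mul_add]
          gcongr
          exact hf_le s
      _ ≤ ∫⁻ s, k₁ (t - s) * f₁ s ∂μ + (l / 2 / 2 + l / 2 / 2) := by
          rw [lintegral_add_left (by fun_prop), lintegral_add_left (by fun_prop)]
          gcongr
          exacts [hsmall t, htail t]
  calc μ {t | l < ∫⁻ s, (k₁ (t - s) + k₂ (t - s)) * f s ∂μ}
      ≤ μ {t | l / 2 ≤ ∫⁻ s, k₁ (t - s) * f₁ s ∂μ} := measure_mono fun t ht => by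
        by_contra! h
        refine (lt_of_lt_of_le ht ((hsplit t).trans (add_le_add_left (le_of_not_ge h) _))).ne ?_
        rw [ENNReal.add_halves, ENNReal.add_halves]
    _ ≤ (∫⁻ t, ∫⁻ s, k₁ (t - s) * f₁ s ∂μ ∂μ) / (l / 2) :=
        meas_ge_le_lintegral_div (by fun_prop) (by simp [hl]) (by finiteness)
    _ = ((∫⁻ s, k₁ s ∂μ) * ∫⁻ s, f₁ s ∂μ) / (l / 2) := by
        rw [lintegral_lintegral_sub_mul hk₁ hf₁m]

end Convolution

theorem lintegral_comp_abs (g : ℝ → ℝ≥0∞) :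
    ∫⁻ s, g |s| = 2 * ∫⁻ s in Set.Ioi 0, g s := by
  have hpos : ∫⁻ s in Set.Ioi (0 : ℝ), g |s| = ∫⁻ s in Set.Ioi 0, g s :=
    setLIntegral_congr_fun measurableSet_Ioi fun s hs => by
      simp only [abs_of_pos (Set.mem_Ioi.1 hs)]
  have hneg : ∫⁻ s in Set.Iic (0 : ℝ), g |s| = ∫⁻ s in Set.Ioi 0, g |s| := by
    rw [← setLIntegral_congr Iio_ae_eq_Iic, ← lintegral_indicator measurableSet_Iio,
      ← lintegral_indicator measurableSet_Ioi, ← lintegral_neg_eq_self (μ := volume)]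
    exact lintegral_congr fun s => by simp [Set.indicator_apply]
  rw [← lintegral_add_compl _ measurableSet_Ioi, Set.compl_Ioi, hneg, hpos, two_mul]

theorem lintegral_abs_rpow_of_abs_lt {α R : ℝ} (hα : α < 1) (hR : 0 ≤ R) :
    ∫⁻ s : ℝ, {s : ℝ | |s| < R}.indicator (fun s => ENNReal.ofReal (|s| ^ (-α))) s
      = ENNReal.ofReal (2 / (1 - α) * R ^ (1 - α)) := by
  have h := lintegral_comp_abs ((Set.Iio R).indicator fun s => ENNReal.ofReal (s ^ (-α)))
  rw [lintegral_indicator measurableSet_Iio, Measure.restrict_restrict measurableSet_Iio,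
    Set.Iio_inter_Ioi, show -α = 1 - α - 1 by ring, setLIntegral_Ioo_rpow (by linarith) hR] at h
  rw [show -α = 1 - α - 1 by ring]
  refine h.trans ?_
  rw [← ENNReal.ofReal_ofNat, ← ENNReal.ofReal_mul zero_le_two]
  congr 1
  ring

theorem lintegral_abs_rpow_of_le_abs {β R : ℝ} (hβ : 1 < β) (hR : 0 < R) :
    ∫⁻ s : ℝ, {s : ℝ | R ≤ |s|}.indicator (fun s => ENNReal.ofReal (|s| ^ (-β))) s
      = ENNReal.ofReal (2 / (β - 1) * R ^ (1 - β)) := by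
  have h := lintegral_comp_abs ((Set.Ici R).indicator fun s => ENNReal.ofReal (s ^ (-β)))
  have htail : ∫⁻ s in Set.Ioi R, ENNReal.ofReal (s ^ (-β))
      = ENNReal.ofReal (R ^ (1 - β) / (β - 1)) := by
    rw [← ofReal_integral_eq_lintegral_ofReal (integrableOn_Ioi_rpow_of_lt (by linarith) hR),
      integral_Ioi_rpow_of_lt (by linarith) hR, neg_add_eq_sub, ← neg_sub β 1, neg_div_neg_eq]
    · filter_upwards [self_mem_ae_restrict measurableSet_Ioi] with s hs
        using Real.rpow_nonneg (hR.trans hs).le _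
  rw [lintegral_indicator measurableSet_Ici, Measure.restrict_restrict measurableSet_Ici,
    Set.inter_eq_left.2 (Set.Ici_subset_Ioi.2 hR), setLIntegral_congr Ioi_ae_eq_Ici.symm, htail,
    ← ENNReal.ofReal_ofNat, ← ENNReal.ofReal_mul zero_le_two] at h
  refine h.trans ?_
  congr 1
  ring

theorem lintegral_rpow_abs_rpow_of_le_abs {α p R : ℝ} (hp : 0 < p) (hαp : 1 < α * p) (hR : 0 < R) :
    (∫⁻ s : ℝ, {s : ℝ | R ≤ |s|}.indicator (fun s => ENNReal.ofReal (|s| ^ (-α))) s ^ p) ^ (1 / p)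
      = ENNReal.ofReal ((2 / (α * p - 1)) ^ (1 / p) * R ^ (1 / p - α)) := by
  have hpow : ∀ s : ℝ, {s : ℝ | R ≤ |s|}.indicator (fun s => ENNReal.ofReal (|s| ^ (-α))) s ^ p
      = {s : ℝ | R ≤ |s|}.indicator (fun s => ENNReal.ofReal (|s| ^ (-(α * p)))) s := fun s => by
    simp only [Set.indicator_apply, Set.mem_ofPred_eq]
    split_ifs
    · rw [ENNReal.ofReal_rpow_of_nonneg (by positivity) hp.le, ← Real.rpow_mul (abs_nonneg s),
        neg_mul]
    · exact ENNReal.zero_rpow_of_pos hp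
  have : 0 < α * p - 1 := by linarith
  simp_rw [hpow]
  rw [lintegral_abs_rpow_of_le_abs hαp hR,
    ENNReal.ofReal_rpow_of_nonneg (by positivity) (by positivity),
    Real.mul_rpow (by positivity) (by positivity), ← Real.rpow_mul hR.le, sub_mul, one_mul,
    mul_one_div, mul_div_cancel_right₀ _ hp.ne']

theorem exists_abs_rpow_eq_add {p p' q : ℝ} (hp : p.HolderConjugate p') (hpq : p < q) :
    ∃ K > (0 : ℝ), ∀ l : ℝ, 0 < l → ∃ k₁ k₂ : ℝ → ℝ≥0∞, Measurable k₁ ∧ Measurable k₂ ∧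
      (∀ s, ENNReal.ofReal (|s| ^ (-(1 / p' + 1 / q))) = k₁ s + k₂ s) ∧
      ∫⁻ s, k₁ s ≤ ENNReal.ofReal (K * l ^ (1 - q / p)) ∧
      (∫⁻ s, k₂ s ^ p') ^ (1 / p') ≤ ENNReal.ofReal l := by
  have hp0 := hp.pos
  have hp'0 := hp.symm.pos
  have hq0 : 0 < q := hp0.trans hpq
  set α := 1 / p' + 1 / q with hα
  have hα1 : 1 - α = 1 / p - 1 / q := by
    have := hp.inv_add_inv_eq_one
    simp only [hα, one_div]
    linarith
  have hα_lt : 0 < 1 - α := by rw [hα1, sub_pos]; exact one_div_lt_one_div_of_lt hp0 hpq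
  have hαp' : α * p' = 1 + p' / q := by rw [hα]; field_simp
  have hαp'1 : 1 < α * p' := by rw [hαp', lt_add_iff_pos_right]; positivity
  set ρ := (2 * q / p') ^ (q / p') with hρ
  have hρ0 : 0 < ρ := by positivity
  refine ⟨2 / (1 - α) * ρ ^ (1 - α), by positivity, fun l hl => ?_⟩
  set R := ρ * l ^ (-q) with hR
  have hR0 : 0 < R := by positivity
  have hk : Measurable fun s : ℝ => ENNReal.ofReal (|s| ^ (-α)) := by fun_prop
  have hset : MeasurableSet {s : ℝ | |s| < R} := measurableSet_lt (by fun_prop) (by fun_prop)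
  have hcompl : {s : ℝ | |s| < R}ᶜ = {s : ℝ | R ≤ |s|} := by ext; simp
  refine ⟨{s : ℝ | |s| < R}.indicator fun s => ENNReal.ofReal (|s| ^ (-α)),
    {s : ℝ | |s| < R}ᶜ.indicator fun s => ENNReal.ofReal (|s| ^ (-α)), hk.indicator hset,
    hk.indicator hset.compl, fun s =>
      (Set.indicator_self_add_compl_apply _ (fun s : ℝ => ENNReal.ofReal (|s| ^ (-α))) s).symm,
    le_of_eq ?_, le_of_eq ?_⟩
  · rw [lintegral_abs_rpow_of_abs_lt (by linarith) hR0.le, hR, Real.mul_rpow hρ0.le (by positivity),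
      ← Real.rpow_mul hl.le, ← mul_assoc, hα1]
    congr 3
    field_simp
    ring
  · rw [hcompl, lintegral_rpow_abs_rpow_of_le_abs hp'0 hαp'1 hR0, hαp',
      add_sub_cancel_left, hα, sub_add_cancel_left, hR, Real.mul_rpow hρ0.le (by positivity), hρ,
      ← Real.rpow_mul (by positivity), ← Real.rpow_mul hl.le,
      show 2 / (p' / q) = 2 * q / p' by field_simp, ← mul_assoc, ← Real.rpow_add (by positivity),
      show 1 / p' + q / p' * -(1 / q) = 0 by field_simp; ring,
      show -q * -(1 / q) = 1 by field_simp, Real.rpow_zero, one_mul, Real.rpow_one]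

theorem lt_mul_rpow_of_rpow_div_lt {M l s : ℝ} (hM : 0 < M) (hl : 0 < l) (hs : 0 < s) {x : ℝ≥0∞}
    (hx : ENNReal.ofReal (l ^ s⁻¹ / M) < x) :
    ENNReal.ofReal l < (ENNReal.ofReal M * x) ^ s := by
  have h := ENNReal.rpow_lt_rpow
    (ENNReal.mul_lt_mul_right (by simpa using hM) ENNReal.ofReal_ne_top hx) hs
  rwa [← ENNReal.ofReal_mul hM.le, mul_div_cancel₀ _ hM.ne', ENNReal.ofReal_rpow_of_nonneg
    (by positivity) hs.le, Real.rpow_inv_rpow hl.le hs.ne'] at h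

theorem volume_riesz_potential_gt_le {p p' q : ℝ} (hp : p.HolderConjugate p') (hpq : p < q) :
    ∃ K > (0 : ℝ), ∀ f : ℝ → ℝ≥0∞, Measurable f → ∫⁻ s, f s ^ p ≤ 1 → ∀ l : ℝ, 0 < l →
      volume {t | ENNReal.ofReal l
          < ∫⁻ s, ENNReal.ofReal (|t - s| ^ (-(1 / p' + 1 / q))) * f s}
        ≤ ENNReal.ofReal K * ENNReal.ofReal (l ^ (-(q / p))) *
          ∫⁻ s, {s | ENNReal.ofReal l < (ENNReal.ofReal K * f s) ^ (p / q)}.indicator f s := by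
  have hp0 := hp.pos
  have hq0 : 0 < q := hp0.trans hpq
  obtain ⟨K, hK, hker⟩ := exists_abs_rpow_eq_add hp hpq
  set M := 4 * (K * 4⁻¹ ^ (1 - q / p)) with hM
  have hM0 : 0 < M := by positivity
  refine ⟨M, hM0, fun f hf hN l hl => ?_⟩
  obtain ⟨k₁, k₂, hk₁m, hk₂m, hk, hk₁, hk₂⟩ := hker (4⁻¹ * l) (by positivity)
  have hquarter : ENNReal.ofReal l / 2 / 2 = ENNReal.ofReal (4⁻¹ * l) := by
    rw [← ENNReal.ofReal_ofNat 2, ← ENNReal.ofReal_div_of_pos two_pos,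
      ← ENNReal.ofReal_div_of_pos two_pos]
    congr 1
    ring
  have hk₁' : ∫⁻ s, k₁ s ≤ ENNReal.ofReal (M / 4 * l ^ (1 - q / p)) := by
    refine hk₁.trans_eq ?_
    rw [Real.mul_rpow (by norm_num) hl.le, hM]
    ring_nf
  set c := ENNReal.ofReal (l ^ (q / p) / M) with hc
  have hlevel : {s | c < f s} ⊆ {s | ENNReal.ofReal l < (ENNReal.ofReal M * f s) ^ (p / q)} :=
    fun s hs => lt_mul_rpow_of_rpow_div_lt hM0 hl (div_pos hp0 hq0) (by rwa [inv_div])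
  simp_rw [hk]
  refine (measure_convolution_gt_le (c := c) hp hk₁m hk₂m hf (by simpa using hl)
    ENNReal.ofReal_ne_top ?_ ?_).trans ?_
  · refine (mul_le_mul_left hk₁' c).trans_eq ?_
    rw [hquarter, hc, ← ENNReal.ofReal_mul (by positivity), Real.rpow_sub hl, Real.rpow_one]
    congr 1
    field_simp
  · rw [hquarter]
    exact (mul_le_of_le_one_right' (ENNReal.rpow_le_one hN (by positivity))).trans hk₂
  · rw [ENNReal.mul_div_right_comm]
    gcongr ?_ * ?_
    · refine (ENNReal.div_le_div_right hk₁' _).trans ?_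
      rw [← ENNReal.ofReal_ofNat 2, ← ENNReal.ofReal_div_of_pos two_pos,
        ← ENNReal.ofReal_div_of_pos (by positivity), ← ENNReal.ofReal_mul hM0.le]
      refine ENNReal.ofReal_le_ofReal ?_
      rw [sub_eq_add_neg, Real.rpow_add hl, Real.rpow_one]
      have : 0 < M * l ^ (-(q / p)) := by positivity
      field_simp
      linarith
    · exact lintegral_mono (Set.indicator_le_indicator_of_subset hlevel fun _ => zero_le)

theorem exists_lintegral_riesz_potential_rpow_le {p p' q : ℝ} (hp : p.HolderConjugate p')
    (hpq : p < q) : ∃ C > (0 : ℝ), ∀ f : ℝ → ℝ≥0∞, Measurable f → ∫⁻ s, f s ^ p ≤ 1 →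
      ∫⁻ t, (∫⁻ s, ENNReal.ofReal (|t - s| ^ (-(1 / p' + 1 / q))) * f s) ^ q
        ≤ ENNReal.ofReal C := by
  have hp0 := hp.pos
  have hq0 : 0 < q := hp0.trans hpq
  have hqp : q / p < q := div_lt_self hq0 hp.lt
  obtain ⟨K, hK, hweak⟩ := volume_riesz_potential_gt_le hp hpq
  refine ⟨q / (q - q / p) * K * K ^ (p - 1), by have := sub_pos.2 hqp; positivity,
    fun f hf hN => ?_⟩
  have hstrong := lintegral_rpow_le_of_distribution_le (μ := volume) (ν := volume)
    (H := fun t => ∫⁻ s, ENNReal.ofReal (|t - s| ^ (-(1 / p' + 1 / q))) * f s)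
    (φ := fun s => (ENNReal.ofReal K * f s) ^ (p / q)) (w := f) (by fun_prop) (by fun_prop)
    (by fun_prop) (by positivity) hqp ENNReal.ofReal_ne_top (hweak f hf hN)
  have hpow : ∀ s, ((ENNReal.ofReal K * f s) ^ (p / q)) ^ (q - q / p) * f s
      = ENNReal.ofReal (K ^ (p - 1)) * f s ^ p := fun s => by
    have hp1 : 0 ≤ p - 1 := by linarith [hp.lt]
    rw [← ENNReal.rpow_mul, show p / q * (q - q / p) = p - 1 by field_simp,
      ENNReal.mul_rpow_of_nonneg _ _ hp1, ENNReal.ofReal_rpow_of_pos hK, mul_assoc]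
    congr 1
    nth_rw 2 [← ENNReal.rpow_one (f s)]
    rw [← ENNReal.rpow_add_of_nonneg _ _ hp1 zero_le_one, sub_add_cancel]
  refine hstrong.trans ?_
  simp_rw [hpow]
  rw [lintegral_const_mul _ (by fun_prop), ← mul_assoc, ← ENNReal.ofReal_mul (by positivity),
    ← ENNReal.ofReal_mul (by positivity)]
  exact mul_le_of_le_one_right' hN

theorem exists_lintegral_riesz_potential_le {p p' q : ℝ} (hp : p.HolderConjugate p') (hpq : p < q) :
    ∃ C > (0 : ℝ), ∀ f : ℝ → ℝ≥0∞, Measurable f →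
      (∫⁻ t, (∫⁻ s, ENNReal.ofReal (|t - s| ^ (-(1 / p' + 1 / q))) * f s) ^ q) ^ (1 / q)
        ≤ ENNReal.ofReal C * (∫⁻ s, f s ^ p) ^ (1 / p) := by
  have hp0 := hp.pos
  have hq0 : 0 < q := hp0.trans hpq
  obtain ⟨C, hC, hnormalized⟩ := exists_lintegral_riesz_potential_rpow_le hp hpq
  refine ⟨C ^ (1 / q), by positivity, fun f hf => ?_⟩
  set N := (∫⁻ s, f s ^ p) ^ (1 / p) with hN
  rcases eq_or_ne N 0 with hN0 | hN0
  · rw [hN, ENNReal.rpow_eq_zero_iff_of_pos (by positivity),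
      lintegral_eq_zero_iff (by fun_prop)] at hN0
    have hf0 : f =ᵐ[volume] 0 := by
      filter_upwards [hN0] with s hs using (ENNReal.rpow_eq_zero_iff_of_pos hp0).1 hs
    have hzero : ∀ t, ∫⁻ s, ENNReal.ofReal (|t - s| ^ (-(1 / p' + 1 / q))) * f s = 0 := fun t => by
      rw [lintegral_eq_zero_iff (by fun_prop)]
      filter_upwards [hf0] with s hs
      rw [hs, Pi.zero_apply, mul_zero]
    simp only [hzero, ENNReal.zero_rpow_of_pos hq0, lintegral_zero,
      ENNReal.zero_rpow_of_pos (one_div_pos.2 hq0), zero_le]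
  rcases eq_or_ne N ⊤ with hNtop | hNtop
  · rw [hNtop, ENNReal.mul_top (ENNReal.ofReal_pos.2 (by positivity)).ne']
    exact le_top
  have hNp : N ^ p = ∫⁻ s, f s ^ p := by
    rw [hN, ← ENNReal.rpow_mul, one_div_mul_cancel hp0.ne', ENNReal.rpow_one]
  have hnorm : ∫⁻ s, (N⁻¹ * f s) ^ p ≤ 1 := by
    simp_rw [ENNReal.mul_rpow_of_nonneg _ _ hp0.le]
    rw [lintegral_const_mul _ (by fun_prop), ← hNp, ← ENNReal.mul_rpow_of_nonneg _ _ hp0.le,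
      ENNReal.inv_mul_cancel hN0 hNtop, ENNReal.one_rpow]
  have h := ENNReal.rpow_le_rpow (hnormalized _ (hf.const_mul N⁻¹) hnorm)
    (show 0 ≤ 1 / q by positivity)
  simp_rw [mul_left_comm _ N⁻¹, lintegral_const_mul' _ _ (ENNReal.inv_ne_top.2 hN0),
    ENNReal.mul_rpow_of_nonneg _ _ hq0.le] at h
  rw [lintegral_const_mul' _ _ (by simp [hN0, hq0.le]),
    ENNReal.mul_rpow_of_nonneg _ _ (by positivity), ← ENNReal.rpow_mul, mul_one_div_cancel hq0.ne',
    ENNReal.rpow_one, ENNReal.ofReal_rpow_of_pos hC] at h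
  rwa [← ENNReal.div_le_iff hN0 hNtop, ENNReal.div_eq_inv_mul]

theorem exists_lintegral_abs_sub_rpow_mul_le {q q' : ℝ} (hq : q.HolderConjugate q') (hq2 : 2 < q) :
    ∃ C > (0 : ℝ), ∀ f : ℝ → ℝ≥0∞, Measurable f →
      (∫⁻ t, (∫⁻ s, ENNReal.ofReal (|t - s| ^ (-(2 / q))) * f s) ^ q) ^ (1 / q)
        ≤ ENNReal.ofReal C * (∫⁻ s, f s ^ q') ^ (1 / q') := by
  have hq'q : q' < q := by
    rw [hq.conjugate_eq, div_lt_iff₀ hq.sub_one_pos]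
    nlinarith
  have hexp : 2 / q = 1 / q + 1 / q := by ring
  simpa only [hexp] using exists_lintegral_riesz_potential_le hq.symm hq'q

theorem exists_lintegral_lintegral_abs_sub_rpow_mul_mul_le {q q' : ℝ} (hq : q.HolderConjugate q')
    (hq2 : 2 < q) : ∃ C > (0 : ℝ), ∀ f : ℝ → ℝ≥0∞, Measurable f →
      ∫⁻ t, ∫⁻ s, ENNReal.ofReal (|t - s| ^ (-(2 / q))) * (f t * f s)
        ≤ ENNReal.ofReal C * ((∫⁻ s, f s ^ q') ^ (1 / q')) ^ 2 := by
  obtain ⟨C, hC, hHLS⟩ := exists_lintegral_abs_sub_rpow_mul_le hq hq2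
  refine ⟨C, hC, fun f hf => ?_⟩
  calc ∫⁻ t, ∫⁻ s, ENNReal.ofReal (|t - s| ^ (-(2 / q))) * (f t * f s)
      = ∫⁻ t, f t * ∫⁻ s, ENNReal.ofReal (|t - s| ^ (-(2 / q))) * f s := by
        simp_rw [mul_left_comm _ (f _)]
        exact lintegral_congr fun t => lintegral_const_mul _ (by fun_prop)
    _ ≤ (∫⁻ t, f t ^ q') ^ (1 / q') *
          (∫⁻ t, (∫⁻ s, ENNReal.ofReal (|t - s| ^ (-(2 / q))) * f s) ^ q) ^ (1 / q) :=
        ENNReal.lintegral_mul_le_Lp_mul_Lq volume hq.symm (by fun_prop) (by fun_prop)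
    _ ≤ (∫⁻ t, f t ^ q') ^ (1 / q') * (ENNReal.ofReal C * (∫⁻ s, f s ^ q') ^ (1 / q')) := by
        gcongr
        exact hHLS f hf
    _ = _ := by ring

theorem setLIntegral_uIoc_abs_sub_rpow_lt_top {α : ℝ} (hα : α < 1) (u t : ℝ) :
    ∫⁻ s in Set.uIoc u t, ENNReal.ofReal (|t - s| ^ (-α)) < ⊤ := by
  let B : Set ℝ := {s | |s| < |t - u| + 1}
  let k : ℝ → ℝ≥0∞ := B.indicator fun s => ENNReal.ofReal (|s| ^ (-α))
  calc ∫⁻ s in Set.uIoc u t, ENNReal.ofReal (|t - s| ^ (-α))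
      = ∫⁻ s in Set.uIoc u t, k (t - s) := by
        refine setLIntegral_congr_fun measurableSet_uIoc fun s hs => ?_
        have hst : |t - s| ≤ |t - u| := Set.abs_sub_right_of_mem_uIcc (Set.uIoc_subset_uIcc hs)
        have hmem : t - s ∈ B := hst.trans_lt (lt_add_one _)
        exact (Set.indicator_of_mem hmem fun s : ℝ => ENNReal.ofReal (|s| ^ (-α))).symm
    _ ≤ ∫⁻ s, k (t - s) := setLIntegral_le_lintegral _ _
    _ = ∫⁻ s, k s := lintegral_sub_left_eq_self k t
    _ < ⊤ := by
        rw [lintegral_abs_rpow_of_abs_lt hα (by positivity)]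
        exact ENNReal.ofReal_lt_top

end HardyLittlewoodSobolev

section MinkowskiIntegral

variable {α β : Type*} [MeasurableSpace α] [MeasurableSpace β] {μ : Measure α} {ν : Measure β}

theorem rpow_lintegral_le_lintegral_rpow_mul_weight {r : ℝ} (hr : 1 < r) {h m : β → ℝ≥0∞}
    (hh : AEMeasurable h ν) (hm : AEMeasurable m ν) (hm_zero : ∀ᵐ s ∂ν, m s = 0 → h s = 0)
    (hm_top : ∀ᵐ s ∂ν, m s ≠ ⊤) :
    (∫⁻ s, h s ∂ν) ^ r ≤ (∫⁻ s, h s ^ r * m s ^ (-(r - 1)) ∂ν) * (∫⁻ s, m s ∂ν) ^ (r - 1) := by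
  have hr0 : 0 < r := by linarith
  have hr1 : 0 < r - 1 := by linarith
  have hsplit : ∫⁻ s, h s ∂ν = ∫⁻ s, (h s * m s ^ (-((r - 1) / r))) * m s ^ ((r - 1) / r) ∂ν := by
    refine lintegral_congr_ae ?_
    filter_upwards [hm_zero, hm_top] with s h0 htop
    by_cases hms : m s = 0
    · simp only [h0 hms, zero_mul]
    · rw [mul_assoc, ← ENNReal.rpow_add _ _ hms htop, neg_add_cancel, ENNReal.rpow_zero, mul_one]
  have hholder := ENNReal.lintegral_mul_le_Lp_mul_Lq ν (Real.HolderConjugate.conjExponent hr)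
    (hh.mul (hm.pow_const (-((r - 1) / r)))) (hm.pow_const ((r - 1) / r))
  have hleft : ∀ s, (h s * m s ^ (-((r - 1) / r))) ^ r = h s ^ r * m s ^ (-(r - 1)) := fun s => by
    rw [ENNReal.mul_rpow_of_nonneg _ _ hr0.le, ← ENNReal.rpow_mul, neg_mul,
      div_mul_cancel₀ _ hr0.ne']
  have hright : ∀ s, (m s ^ ((r - 1) / r)) ^ r.conjExponent = m s := fun s => by
    rw [← ENNReal.rpow_mul, Real.conjExponent, div_mul_div_cancel₀ hr0.ne', div_self hr1.ne',
      ENNReal.rpow_one]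
  simp only [Pi.mul_apply, hleft, hright, ← hsplit] at hholder
  calc (∫⁻ s, h s ∂ν) ^ r
      ≤ ((∫⁻ s, h s ^ r * m s ^ (-(r - 1)) ∂ν) ^ (1 / r) *
          (∫⁻ s, m s ∂ν) ^ (1 / r.conjExponent)) ^ r := ENNReal.rpow_le_rpow hholder hr0.le
    _ = (∫⁻ s, h s ^ r * m s ^ (-(r - 1)) ∂ν) * (∫⁻ s, m s ∂ν) ^ (r - 1) := by
        rw [ENNReal.mul_rpow_of_nonneg _ _ hr0.le, ← ENNReal.rpow_mul, ← ENNReal.rpow_mul,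
          one_div_mul_cancel hr0.ne', ENNReal.rpow_one, Real.conjExponent, one_div_div,
          div_mul_cancel₀ _ hr0.ne']

theorem ae_ae_eq_zero_of_lintegral_eq_zero [SFinite μ] [SFinite ν] {h : α → β → ℝ≥0∞}
    (hh : Measurable (Function.uncurry h)) :
    ∀ᵐ x ∂μ, ∀ᵐ s ∂ν, ∫⁻ x, h x s ∂μ = 0 → h x s = 0 := by
  have hint : Measurable fun s => ∫⁻ x, h x s ∂μ := hh.lintegral_prod_left
  rw [Measure.ae_ae_comm]
  · refine Eventually.of_forall fun s => ?_
    by_cases h0 : ∫⁻ x, h x s ∂μ = 0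
    · filter_upwards [(lintegral_eq_zero_iff hh.of_uncurry_right).1 h0] with x hx _ using hx
    · exact Eventually.of_forall fun x h1 => absurd h1 h0
  · simp only [imp_iff_not_or, Set.ofPred_or]
    exact ((measurableSet_eq_fun (hint.comp measurable_snd) measurable_const).compl).union
      (measurableSet_eq_fun hh measurable_const)

theorem rpow_mul_rpow_neg_le {r : ℝ} (hr : 1 < r) (y : ℝ≥0∞) : y ^ r * y ^ (-(r - 1)) ≤ y := by
  rcases eq_or_ne y 0 with rfl | h0
  · rw [ENNReal.zero_rpow_of_pos (by linarith), zero_mul]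
  rcases eq_or_ne y ⊤ with rfl | htop
  · exact le_top
  · rw [← ENNReal.rpow_add _ _ h0 htop, neg_sub, add_sub_cancel, ENNReal.rpow_one]

theorem lintegral_rpow_lintegral_le [SFinite μ] [SFinite ν] {r : ℝ} (hr : 1 ≤ r)
    {h : α → β → ℝ≥0∞} (hh : Measurable (Function.uncurry h)) :
    (∫⁻ x, (∫⁻ s, h x s ∂ν) ^ r ∂μ) ^ (1 / r) ≤ ∫⁻ s, (∫⁻ x, h x s ^ r ∂μ) ^ (1 / r) ∂ν := by
  rcases hr.eq_or_lt with rfl | hr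
  · simp only [ENNReal.rpow_one, div_one]
    exact (lintegral_lintegral_swap hh.aemeasurable).le
  have hr0 : 0 < r := by linarith
  set m : β → ℝ≥0∞ := fun s => (∫⁻ x, h x s ^ r ∂μ) ^ (1 / r) with hm
  have hm_meas : Measurable m := ((hh.pow_const r).lintegral_prod_left).pow_const (1 / r)
  have hm_rpow : ∀ s, ∫⁻ x, h x s ^ r ∂μ = m s ^ r := fun s => by
    rw [hm, ← ENNReal.rpow_mul, one_div_mul_cancel hr0.ne', ENNReal.rpow_one]
  have hm_zero : ∀ᵐ x ∂μ, ∀ᵐ s ∂ν, m s = 0 → h x s = 0 := by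
    filter_upwards [ae_ae_eq_zero_of_lintegral_eq_zero (μ := μ) (ν := ν) (h := fun x s => h x s ^ r)
      (hh.pow_const r)] with x hx
    filter_upwards [hx] with s hs hms
    refine (ENNReal.rpow_eq_zero_iff_of_pos hr0).1 (hs ?_)
    rw [hm_rpow, hms, ENNReal.zero_rpow_of_pos hr0]
  set M := ∫⁻ s, m s ∂ν
  rcases eq_or_ne M ⊤ with hM_top | hM_top
  · exact hM_top ▸ le_top
  have hm_top : ∀ᵐ s ∂ν, m s ≠ ⊤ := (ae_lt_top hm_meas hM_top).mono fun _ hs => hs.ne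
  rw [one_div, ENNReal.rpow_inv_le_iff hr0]
  calc ∫⁻ x, (∫⁻ s, h x s ∂ν) ^ r ∂μ
      ≤ ∫⁻ x, (∫⁻ s, h x s ^ r * m s ^ (-(r - 1)) ∂ν) * M ^ (r - 1) ∂μ := by
        refine lintegral_mono_ae (hm_zero.mono fun x hx => ?_)
        exact rpow_lintegral_le_lintegral_rpow_mul_weight hr hh.of_uncurry_left.aemeasurable
          hm_meas.aemeasurable hx hm_top
    _ = (∫⁻ s, m s ^ r * m s ^ (-(r - 1)) ∂ν) * M ^ (r - 1) := by
        rw [lintegral_mul_const' _ _ (ENNReal.rpow_ne_top_of_nonneg (by linarith) hM_top),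
          lintegral_lintegral_swap (by fun_prop)]
        congr 1
        refine lintegral_congr fun s => ?_
        rw [lintegral_mul_const _ (hh.of_uncurry_right.pow_const r), hm_rpow]
    _ ≤ M * M ^ (r - 1) := by
        gcongr ?_ * _
        exact lintegral_mono fun s => rpow_mul_rpow_neg_le hr (m s)
    _ = M ^ r := by
        nth_rewrite 1 [← ENNReal.rpow_one M]
        rw [← ENNReal.rpow_add_of_nonneg _ _ zero_le_one (by linarith), add_sub_cancel]

end MinkowskiIntegral

section Interpolation

/-- `T`, the modulus of an operator, is dispersive with constant `A` if it is subadditive on `L¹`,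
is bounded from `L¹` to `L^∞` with norm at most `A`, and contracts the `L²` norm of `L¹` functions.
These are the two endpoints of the interpolation behind the `L^{r'} → L^r` decay of the free
propagator. -/
structure IsDispersive {α β E : Type*} [MeasurableSpace α] [MeasurableSpace β]
    [NormedAddCommGroup E] (T : (α → E) → β → ℝ≥0∞) (A : ℝ) (μ : Measure α) (ν : Measure β) :
    Prop where
  aemeasurable : ∀ f, Integrable f μ → AEMeasurable (T f) ν
  add_le : ∀ f g, Integrable f μ → Integrable g μ → ∀ y, T (f + g) y ≤ T f y + T g y
  le_mul_lintegral : ∀ f, Integrable f μ → ∀ y, T f y ≤ ENNReal.ofReal A * ∫⁻ x, ‖f x‖ₑ ∂μ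
  lintegral_rpow_two_le : ∀ f, Integrable f μ →
    ∫⁻ y, T f y ^ (2 : ℝ) ∂ν ≤ ∫⁻ x, ‖f x‖ₑ ^ (2 : ℝ) ∂μ

variable {α β E : Type*} [MeasurableSpace α] [MeasurableSpace β] {μ : Measure α} {ν : Measure β}
  [NormedAddCommGroup E] {T : (α → E) → β → ℝ≥0∞} {A r r' : ℝ} {f : α → E}

theorem IsDispersive.measure_gt_le (hT : IsDispersive T A μ ν) (hf : Integrable f μ) {S : Set α}
    (hS : NullMeasurableSet S μ) {l : ℝ≥0∞} (hl : l ≠ 0) (hl' : l ≠ ⊤)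
    (hlarge : ENNReal.ofReal A * ∫⁻ x, Sᶜ.indicator (fun x => ‖f x‖ₑ) x ∂μ ≤ l / 2) :
    ν {y | l < T f y}
      ≤ (∫⁻ x, S.indicator (fun x => ‖f x‖ₑ ^ (2 : ℝ)) x ∂μ) / (l / 2) ^ (2 : ℝ) := by
  have hsmall_int : Integrable (S.indicator f) μ := hf.indicator₀ hS
  have hlarge_int : Integrable (Sᶜ.indicator f) μ := hf.indicator₀ hS.compl
  have hsub : {y | l < T f y} ⊆ {y | (l / 2) ^ (2 : ℝ) ≤ T (S.indicator f) y ^ (2 : ℝ)} := by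
    intro y hy
    refine ENNReal.rpow_le_rpow ?_ zero_le_two
    by_contra! h
    have hy' : T f y ≤ l / 2 + l / 2 := calc
      T f y = T (S.indicator f + Sᶜ.indicator f) y := by rw [Set.indicator_self_add_compl]
      _ ≤ T (S.indicator f) y + T (Sᶜ.indicator f) y := hT.add_le _ _ hsmall_int hlarge_int y
      _ ≤ l / 2 + l / 2 := by
        refine add_le_add h.le (((hT.le_mul_lintegral _ hlarge_int y).trans_eq ?_).trans hlarge)
        simp only [enorm_indicator_eq_indicator_enorm]
    rw [ENNReal.add_halves] at hy'
    exact not_lt.2 hy' hy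
  calc ν {y | l < T f y}
      ≤ (∫⁻ y, T (S.indicator f) y ^ (2 : ℝ) ∂ν) / (l / 2) ^ (2 : ℝ) := by
        refine (measure_mono hsub).trans
          (meas_ge_le_lintegral_div ((hT.aemeasurable _ hsmall_int).pow_const _) ?_ ?_)
        · simp [hl]
        · finiteness
    _ ≤ (∫⁻ x, S.indicator (fun x => ‖f x‖ₑ ^ (2 : ℝ)) x ∂μ) / (l / 2) ^ (2 : ℝ) := by
        refine ENNReal.div_le_div_right ((hT.lintegral_rpow_two_le _ hsmall_int).trans_eq ?_) _
        refine lintegral_congr fun x => ?_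
        by_cases hx : x ∈ S <;> simp [hx]

theorem IsDispersive.measure_gt_le_rpow_cutoff (hT : IsDispersive T A μ ν)
    (hf : Integrable f μ) (hN0 : ∫⁻ x, ‖f x‖ₑ ^ r' ∂μ ≠ 0) (hN : ∫⁻ x, ‖f x‖ₑ ^ r' ∂μ ≠ ⊤)
    {l : ℝ} (hl : 0 < l) :
    ν {y | ENNReal.ofReal l < T f y} ≤ 4 * ENNReal.ofReal (l ^ (-(2 : ℝ))) *
      ∫⁻ x, {x | ENNReal.ofReal l < 2 * ENNReal.ofReal A * (∫⁻ x, ‖f x‖ₑ ^ r' ∂μ) *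
        ‖f x‖ₑ ^ (1 - r')}.indicator (fun x => ‖f x‖ₑ ^ (2 : ℝ)) x ∂μ := by
  set N := ∫⁻ x, ‖f x‖ₑ ^ r' ∂μ with hN_def
  set S := {x | ENNReal.ofReal l < 2 * ENNReal.ofReal A * N * ‖f x‖ₑ ^ (1 - r')}
  have hS : NullMeasurableSet S μ := nullMeasurableSet_lt (by fun_prop)
    ((hf.aestronglyMeasurable.enorm.pow_const _).const_mul _)
  have hpoint : ∀ x, 2 * ENNReal.ofReal A * N * Sᶜ.indicator (fun x => ‖f x‖ₑ) x
      ≤ ENNReal.ofReal l * ‖f x‖ₑ ^ r' := fun x => by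
    by_cases hx : x ∈ S
    · simp [hx]
    rw [Set.indicator_of_mem (by simpa using hx)]
    rcases eq_or_ne ‖f x‖ₑ 0 with h0 | h0
    · rw [h0, mul_zero]; exact zero_le
    calc 2 * ENNReal.ofReal A * N * ‖f x‖ₑ
        = 2 * ENNReal.ofReal A * N * ‖f x‖ₑ ^ (1 - r') * ‖f x‖ₑ ^ r' := by
          rw [mul_assoc _ (‖f x‖ₑ ^ (1 - r')), ← ENNReal.rpow_add _ _ h0 enorm_ne_top,
            sub_add_cancel, ENNReal.rpow_one]
      _ ≤ ENNReal.ofReal l * ‖f x‖ₑ ^ r' := by gcongr; exact not_lt.1 hx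
  have hlarge : ENNReal.ofReal A * ∫⁻ x, Sᶜ.indicator (fun x => ‖f x‖ₑ) x ∂μ
      ≤ ENNReal.ofReal l / 2 := by
    have h := lintegral_mono (μ := μ) hpoint
    rw [lintegral_const_mul' _ _ (by finiteness), lintegral_const_mul' _ _ ENNReal.ofReal_ne_top,
      ← hN_def, mul_assoc 2, mul_comm _ N, mul_left_comm 2 N, mul_comm _ N, mul_assoc,
      ENNReal.mul_le_mul_iff_right hN0 hN, mul_assoc] at h
    rw [ENNReal.le_div_iff_mul_le (by simp) (by simp), mul_comm]
    exact h
  refine (hT.measure_gt_le hf hS (by simpa using hl)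
    ENNReal.ofReal_ne_top hlarge).trans_eq ?_
  have hfour : (ENNReal.ofReal l / 2) ^ (2 : ℝ) = ENNReal.ofReal (l ^ (2 : ℝ) / 4) := by
    rw [← ENNReal.ofReal_ofNat 2, ← ENNReal.ofReal_div_of_pos two_pos,
      ENNReal.ofReal_rpow_of_pos (by positivity), Real.div_rpow hl.le zero_le_two]
    norm_num
  rw [hfour, ENNReal.div_eq_inv_mul, ← ENNReal.ofReal_inv_of_pos (by positivity), inv_div,
    div_eq_mul_inv, ← Real.rpow_neg hl.le, ENNReal.ofReal_mul (by norm_num), ENNReal.ofReal_ofNat]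

theorem IsDispersive.lintegral_rpow_le [SFinite μ] [SFinite ν] (hT : IsDispersive T A μ ν)
    (hr : r.HolderConjugate r') (hr2 : 2 < r) (hf : Integrable f μ)
    (hN0 : ∫⁻ x, ‖f x‖ₑ ^ r' ∂μ ≠ 0) (hN : ∫⁻ x, ‖f x‖ₑ ^ r' ∂μ ≠ ⊤) :
    ∫⁻ y, T f y ^ r ∂ν ≤ ENNReal.ofReal (4 * r / (r - 2)) *
      (2 * ENNReal.ofReal A * ∫⁻ x, ‖f x‖ₑ ^ r' ∂μ) ^ (r - 2) * ∫⁻ x, ‖f x‖ₑ ^ r' ∂μ := by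
  have hr0 : 0 < r - 2 := by linarith
  have hf_meas := hf.aestronglyMeasurable.enorm
  set M := 2 * ENNReal.ofReal A * ∫⁻ x, ‖f x‖ₑ ^ r' ∂μ
  have hM_top : M ≠ ⊤ := by finiteness
  have hpow : ∀ x, (M * ‖f x‖ₑ ^ (1 - r')) ^ (r - 2) * ‖f x‖ₑ ^ (2 : ℝ)
      = M ^ (r - 2) * ‖f x‖ₑ ^ r' := fun x => by
    rw [ENNReal.mul_rpow_of_nonneg _ _ hr0.le, ← ENNReal.rpow_mul, mul_assoc]
    congr 1
    rcases eq_or_ne ‖f x‖ₑ 0 with h0 | h0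
    · rw [h0, ENNReal.zero_rpow_of_pos two_pos, ENNReal.zero_rpow_of_pos hr.symm.pos, mul_zero]
    · rw [← ENNReal.rpow_add _ _ h0 enorm_ne_top, hr.conjugate_eq]
      congr 1
      field_simp [hr.sub_one_ne_zero]
      ring
  refine (lintegral_rpow_le_of_distribution_le (hT.aemeasurable f hf)
    ((hf_meas.pow_const (1 - r')).const_mul M) (hf_meas.pow_const 2) zero_le_two hr2
    (by finiteness) fun l hl => hT.measure_gt_le_rpow_cutoff hf hN0 hN hl).trans_eq ?_
  simp_rw [hpow]
  rw [lintegral_const_mul' _ _ (by finiteness), ← ENNReal.ofReal_ofNat 4, ← mul_assoc,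
    ← ENNReal.ofReal_mul (by positivity)]
  congr 3
  ring

/-- The factor, depending only on `r`, that the interpolation of the two endpoint bounds of a
dispersive operator costs in the `L^{r'} → L^r` bound; at the endpoint `r = 2` nothing is lost, and
the formula for `r > 2`, which comes from the Marcinkiewicz argument, would divide by zero. -/
def interpolationConst (r : ℝ) : ℝ :=
  if r = 2 then 1 else (4 * r / (r - 2) * 2 ^ (r - 2)) ^ (1 / r)

theorem interpolationConst_pos (hr2 : 2 ≤ r) : 0 < interpolationConst r := by
  rw [interpolationConst]
  split_ifs with h
  · exact one_pos
  · have : 0 < r - 2 := sub_pos.2 (hr2.lt_of_ne' h)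
    positivity

theorem interpolation_rpow_eq (hr : r.HolderConjugate r') (hr2 : 2 < r) (hA : 0 < A) {n : ℝ}
    (hn : 0 < n) : (4 * r / (r - 2) * (2 * A * n) ^ (r - 2) * n) ^ (1 / r)
      = interpolationConst r * A ^ (1 - 2 / r) * n ^ (1 / r') := by
  have : 0 < r - 2 := by linarith
  have hr_pos := hr.pos
  have hA_exp : A ^ (1 - 2 / r) = (A ^ (r - 2)) ^ (1 / r) := by
    rw [← Real.rpow_mul hA.le, sub_mul, mul_one_div_cancel hr_pos.ne', mul_one_div]
  have hn_exp : n ^ (1 / r') = (n ^ (r - 2) * n) ^ (1 / r) := by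
    rw [← Real.rpow_add_one hn.ne', ← Real.rpow_mul hn.le, hr.conjugate_eq, one_div_div]
    congr 1
    ring
  rw [interpolationConst, if_neg hr2.ne', hA_exp, hn_exp, ← Real.mul_rpow (by positivity)
    (by positivity), ← Real.mul_rpow (by positivity) (by positivity),
    Real.mul_rpow (x := 2 * A) (by positivity) hn.le, Real.mul_rpow (x := 2) zero_le_two hA.le]
  congr 1
  ring

theorem IsDispersive.lintegral_rpow_one_div_le [SFinite μ] [SFinite ν] (hT : IsDispersive T A μ ν)
    (hA : 0 < A) (hr : r.HolderConjugate r') (hr2 : 2 ≤ r) (hf : Integrable f μ) :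
    (∫⁻ y, T f y ^ r ∂ν) ^ (1 / r) ≤ ENNReal.ofReal (interpolationConst r * A ^ (1 - 2 / r)) *
      (∫⁻ x, ‖f x‖ₑ ^ r' ∂μ) ^ (1 / r') := by
  rcases hr2.eq_or_lt with rfl | hr2
  · have hr'2 : r' = 2 := by rw [hr.conjugate_eq]; norm_num
    subst hr'2
    simpa [interpolationConst] using
      ENNReal.rpow_le_rpow (hT.lintegral_rpow_two_le f hf) (by norm_num : (0 : ℝ) ≤ 1 / 2)
  set N := ∫⁻ x, ‖f x‖ₑ ^ r' ∂μ with hN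
  rcases eq_or_ne N 0 with hN0 | hN0
  · rw [hN, lintegral_eq_zero_iff' (hf.aestronglyMeasurable.enorm.pow_const r')] at hN0
    have hf0 : ∫⁻ x, ‖f x‖ₑ ∂μ = 0 := by
      rw [lintegral_eq_zero_iff' hf.aestronglyMeasurable.enorm]
      filter_upwards [hN0] with x hx using (ENNReal.rpow_eq_zero_iff_of_pos hr.symm.pos).1 hx
    have hTf : ∀ y, T f y = 0 := fun y =>
      le_antisymm ((hT.le_mul_lintegral f hf y).trans_eq (by rw [hf0, mul_zero])) zero_le
    simp only [hTf, ENNReal.zero_rpow_of_pos hr.pos, lintegral_zero,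
      ENNReal.zero_rpow_of_pos (one_div_pos.2 hr.pos), zero_le]
  rcases eq_or_ne N ⊤ with hN_top | hN_top
  · rw [hN_top, ENNReal.top_rpow_of_pos (one_div_pos.2 hr.symm.pos), ENNReal.mul_top]
    · exact le_top
    · have := interpolationConst_pos hr2.le
      exact (ENNReal.ofReal_pos.2 (by positivity)).ne'
  have h := ENNReal.rpow_le_rpow (hT.lintegral_rpow_le hr hr2 hf hN0 hN_top)
    (one_div_nonneg.2 hr.nonneg)
  rw [← hN] at h
  refine h.trans_eq ?_
  obtain ⟨n, hn, hNn⟩ : ∃ n : ℝ, 0 < n ∧ N = ENNReal.ofReal n :=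
    ⟨N.toReal, ENNReal.toReal_pos hN0 hN_top, (ENNReal.ofReal_toReal hN_top).symm⟩
  have : 0 < r - 2 := by linarith
  have := hr.pos
  rw [hNn, ← ENNReal.ofReal_ofNat, ← ENNReal.ofReal_mul zero_le_two,
    ← ENNReal.ofReal_mul (by positivity), ENNReal.ofReal_rpow_of_pos (by positivity),
    ENNReal.ofReal_rpow_of_pos hn, ← ENNReal.ofReal_mul (by positivity),
    ← ENNReal.ofReal_mul (by positivity), ENNReal.ofReal_rpow_of_pos (by positivity),
    ← ENNReal.ofReal_mul (by have := interpolationConst_pos hr2.le; positivity),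
    interpolation_rpow_eq hr hr2 hA hn]

end Interpolation

section Damping

variable {α β : Type*} [MeasurableSpace α] [MeasurableSpace β] {μ : Measure α} {ν : Measure β}

/-- The measure `e^{-δw} μ`. Oscillatory integrals that only converge conditionally against `μ`
converge absolutely against it, and bounds that are uniform in `δ > 0` pass to `μ`. -/
def dampedMeasure (μ : Measure α) (w : α → ℝ) (δ : ℝ) : Measure α :=
  μ.withDensity fun x => ENNReal.ofReal (Real.exp (-(δ * w x)))

instance [SFinite μ] {w : α → ℝ} {δ : ℝ} : SFinite (dampedMeasure μ w δ) := by
  unfold dampedMeasure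
  infer_instance

theorem lintegral_dampedMeasure {w : α → ℝ} (hw : Measurable w) (δ : ℝ) {H : α → ℝ≥0∞}
    (hH : Measurable H) :
    ∫⁻ x, H x ∂dampedMeasure μ w δ = ∫⁻ x, ENNReal.ofReal (Real.exp (-(δ * w x))) * H x ∂μ :=
  lintegral_withDensity_eq_lintegral_mul _ (by fun_prop) hH

theorem dampedMeasure_le {w : α → ℝ} {δ : ℝ} (hw : ∀ x, 0 ≤ w x) (hδ : 0 ≤ δ) :
    dampedMeasure μ w δ ≤ μ := by
  conv_rhs => rw [← withDensity_one (μ := μ)]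
  refine withDensity_mono (.of_forall fun x => ENNReal.ofReal_le_one.2 ?_)
  exact Real.exp_le_one_iff.2 (neg_nonpos.2 (mul_nonneg hδ (hw x)))

theorem integral_dampedMeasure {w : α → ℝ} (hw : Measurable w) (δ : ℝ) (f : α → ℂ) :
    ∫ x, f x ∂dampedMeasure μ w δ = ∫ x, (Real.exp (-(δ * w x)) : ℂ) * f x ∂μ := by
  rw [dampedMeasure, integral_withDensity_eq_integral_toReal_smul (by fun_prop) (by simp)]
  refine integral_congr_ae (.of_forall fun x => ?_)
  simp only [ENNReal.toReal_ofReal (Real.exp_nonneg _), real_smul]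

theorem dampedMeasure_prod [SFinite μ] [SFinite ν] {v : α → ℝ} {w : β → ℝ} (hv : Measurable v)
    (hw : Measurable w) (δ : ℝ) : (dampedMeasure μ v δ).prod (dampedMeasure ν w δ)
      = dampedMeasure (μ.prod ν) (fun p => v p.1 + w p.2) δ := by
  rw [dampedMeasure, dampedMeasure, prod_withDensity (by fun_prop) (by fun_prop), dampedMeasure]
  congr 1
  ext p
  rw [← ENNReal.ofReal_mul (Real.exp_nonneg _), ← Real.exp_add, mul_add, neg_add]

theorem lintegral_le_of_forall_dampedMeasure_le {w : α → ℝ} (hw : Measurable w) {H : α → ℝ≥0∞}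
    (hH : Measurable H) {R : ℝ≥0∞} (h : ∀ δ > 0, ∫⁻ x, H x ∂dampedMeasure μ w δ ≤ R) :
    ∫⁻ x, H x ∂μ ≤ R := by
  let δ : ℕ → ℝ := fun n => 1 / ((n : ℝ) + 1)
  have hlim : ∀ x,
      Tendsto (fun n => ENNReal.ofReal (Real.exp (-(δ n * w x))) * H x) atTop (𝓝 (H x)) := by
    intro x
    have hδ : Tendsto (fun n => Real.exp (-(δ n * w x))) atTop (𝓝 (Real.exp (-(0 * w x)))) :=
      (Real.continuous_exp.tendsto _).comp
        (tendsto_one_div_add_atTop_nhds_zero_nat.mul_const _).neg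
    simpa using ENNReal.Tendsto.mul_const (ENNReal.tendsto_ofReal hδ) (.inl (by simp))
  calc ∫⁻ x, H x ∂μ
      = ∫⁻ x, liminf (fun n => ENNReal.ofReal (Real.exp (-(δ n * w x))) * H x) atTop ∂μ := by
        simp_rw [fun x => (hlim x).liminf_eq]
    _ ≤ liminf (fun n => ∫⁻ x, ENNReal.ofReal (Real.exp (-(δ n * w x))) * H x ∂μ) atTop :=
        lintegral_liminf_le fun n => by fun_prop
    _ ≤ R := liminf_le_of_frequently_le' <| .of_forall fun n =>
        (lintegral_dampedMeasure hw (δ n) hH).symm.trans_le (h (δ n) (by positivity))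

end Damping

section TTStar

variable {α β : Type*} [MeasurableSpace α] [MeasurableSpace β] {μ : Measure α} {ν : Measure β}

theorem lintegral_enorm_integral_rpow_two_le [SFinite μ] [SFinite ν] {h : α → β → ℂ}
    (hh : Measurable (Function.uncurry h))
    (hfin : ∫⁻ a, (∫⁻ b, ‖h a b‖ₑ ∂ν) ^ (2 : ℝ) ∂μ ≠ ⊤) :
    ∫⁻ a, ‖∫ b, h a b ∂ν‖ₑ ^ (2 : ℝ) ∂μ
      ≤ ∫⁻ b, ∫⁻ b', ‖∫ a, h a b * starRingEnd ℂ (h a b') ∂μ‖ₑ ∂ν ∂ν := by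
  let F : α → β × β → ℂ := fun a p => h a p.1 * starRingEnd ℂ (h a p.2)
  have hF_meas : Measurable (Function.uncurry F) :=
    (hh.comp (f := fun p : α × β × β => (p.1, p.2.1)) (by fun_prop)).mul
      (continuous_conj.measurable.comp
        (hh.comp (f := fun p : α × β × β => (p.1, p.2.2)) (by fun_prop)))
  have hF_int : Integrable (Function.uncurry F) (μ.prod (ν.prod ν)) := by
    refine ⟨hF_meas.aestronglyMeasurable, ?_⟩
    rw [hasFiniteIntegral_iff_enorm, lintegral_prod _ (by fun_prop)]
    refine lt_of_eq_of_lt (lintegral_congr fun a => ?_) hfin.lt_top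
    have ha : Measurable fun b => ‖h a b‖ₑ := hh.of_uncurry_left.enorm
    simp only [Function.uncurry_apply_pair, F, enorm_mul, RCLike.enorm_conj]
    rw [lintegral_prod_mul ha.aemeasurable ha.aemeasurable, ENNReal.rpow_two, sq]
  have hsq : ∀ a, ∫ p, F a p ∂ν.prod ν = ((‖∫ b, h a b ∂ν‖ ^ 2 : ℝ) : ℂ) := fun a => by
    rw [ofReal_pow, ← mul_conj', ← integral_conj]
    exact integral_prod_mul (h a) fun b => starRingEnd ℂ (h a b)
  have hsq_int : Integrable (fun a => ‖∫ b, h a b ∂ν‖ ^ 2) μ := by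
    have := hF_int.integral_prod_left.re
    simpa only [Function.uncurry_apply_pair, hsq, RCLike.re_to_complex, ofReal_re] using this
  calc ∫⁻ a, ‖∫ b, h a b ∂ν‖ₑ ^ (2 : ℝ) ∂μ
      = ‖∫ a, ((‖∫ b, h a b ∂ν‖ ^ 2 : ℝ) : ℂ) ∂μ‖ₑ := by
        rw [integral_complex_ofReal, ← ofReal_norm, norm_real, Real.norm_of_nonneg
          (integral_nonneg fun a => by positivity), ofReal_integral_eq_lintegral_ofReal hsq_int
          (.of_forall fun a => by positivity)]
        simp only [ENNReal.ofReal_pow (norm_nonneg _), ofReal_norm, ENNReal.rpow_two]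
    _ = ‖∫ p, ∫ a, F a p ∂μ ∂ν.prod ν‖ₑ := by
        simp_rw [← hsq]
        rw [integral_integral_swap hF_int]
    _ ≤ ∫⁻ p, ‖∫ a, F a p ∂μ‖ₑ ∂ν.prod ν := enorm_integral_le_lintegral_enorm _
    _ = ∫⁻ b, ∫⁻ b', ‖∫ a, h a b * starRingEnd ℂ (h a b') ∂μ‖ₑ ∂ν ∂ν :=
        lintegral_prod _
          hF_meas.stronglyMeasurable.integral_prod_left'.enorm.aemeasurable

end TTStar

section GaussianPairing

variable {d : ℕ} {δ s s' : ℝ}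

/-- The square of the Euclidean norm; the norm that Mathlib puts on `Fin d → ℝ` is the sup norm. -/
def euclideanSq (x : Fin d → ℝ) : ℝ := ∑ i, x i ^ 2

theorem measurable_euclideanSq : Measurable (euclideanSq (d := d)) := by
  unfold euclideanSq
  fun_prop

theorem euclideanSq_nonneg (x : Fin d → ℝ) : 0 ≤ euclideanSq x :=
  Finset.sum_nonneg fun i _ => sq_nonneg (x i)

theorem exp_neg_mul_euclideanSq (b : ℝ) (x : Fin d → ℝ) :
    Real.exp (-(b * euclideanSq x)) = ∏ i, Real.exp (-b * x i ^ 2) := by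
  rw [← Real.exp_sum, euclideanSq, ← Finset.mul_sum, neg_mul]

theorem integrable_exp_neg_mul_euclideanSq (hδ : 0 < δ) :
    Integrable fun x : Fin d → ℝ => Real.exp (-(δ * euclideanSq x)) := by
  simp_rw [exp_neg_mul_euclideanSq]
  exact Integrable.fintype_prod fun _ => integrable_exp_neg_mul_sq hδ

theorem lintegral_exp_neg_mul_euclideanSq (hδ : 0 < δ) :
    ∫⁻ x : Fin d → ℝ, ENNReal.ofReal (Real.exp (-(δ * euclideanSq x)))
      = ENNReal.ofReal ((Real.pi / δ) ^ ((d : ℝ) / 2)) := by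
  rw [← ofReal_integral_eq_lintegral_ofReal (integrable_exp_neg_mul_euclideanSq hδ)
    (.of_forall fun x => Real.exp_nonneg _)]
  simp_rw [exp_neg_mul_euclideanSq]
  rw [integral_fintype_prod_volume_eq_pow (fun x : ℝ => Real.exp (-δ * x ^ 2)), integral_gaussian,
    Fintype.card_fin, Real.sqrt_eq_rpow, ← Real.rpow_mul_natCast (by positivity),
    one_div_mul_eq_div]

theorem isFiniteMeasure_dampedMeasure_euclideanSq (hδ : 0 < δ) :
    IsFiniteMeasure (dampedMeasure (volume : Measure (Fin d → ℝ)) euclideanSq δ) :=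
  isFiniteMeasure_withDensity_ofReal (integrable_exp_neg_mul_euclideanSq hδ).2

/-- The complex Gaussian parameter `b` for which `e^{-δ|x|²} e^{i|x|²/(4s)} e^{-i|x|²/(4s')}` is
`e^{-b|x|²}`. -/
def gaussianParam (δ s s' : ℝ) : ℂ := δ - ((1 / (4 * s) - 1 / (4 * s') : ℝ) : ℂ) * I

theorem gaussianParam_re : (gaussianParam δ s s').re = δ := by simp [gaussianParam]

theorem gaussianParam_self : gaussianParam δ s s = δ := by simp [gaussianParam]

theorem norm_gaussianParam_pos (hδ : 0 < δ) : 0 < ‖gaussianParam δ s s'‖ :=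
  hδ.trans_le (gaussianParam_re.symm.trans_le (re_le_norm _))

theorem abs_sub_le_mul_norm_gaussianParam (hs : s ≠ 0) (hs' : s' ≠ 0) :
    |s - s'| ≤ 4 * |s| * |s'| * ‖gaussianParam δ s s'‖ := by
  have him : (gaussianParam δ s s').im = (s - s') / (4 * s * s') := by
    simp only [gaussianParam, sub_im, ofReal_im, mul_im, ofReal_re, I_im, I_re]
    field_simp
    ring
  have h := abs_im_le_norm (gaussianParam δ s s')
  rw [him, abs_div, abs_mul, abs_mul, abs_of_pos (four_pos : (0 : ℝ) < 4),
    div_le_iff₀ (by positivity)] at h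
  linarith

theorem Sfree_comm (x y : Fin d → ℝ) (s : ℝ) : Sfree d x y s = Sfree d y x s := by
  simp only [Sfree, sub_sq_comm]

theorem Sfree_eq (x y : Fin d → ℝ) (s : ℝ) :
    Sfree d x y s = (4 * (Real.pi : ℂ) * I * s) ^ (-(d : ℂ) / 2) *
      cexp ((euclideanSq (x - y) / (4 * s) : ℝ) * I) := by
  rw [Sfree, euclideanSq]
  push_cast
  simp only [Pi.sub_apply, ofReal_sub]
  ring_nf

theorem norm_Sfree (x y : Fin d → ℝ) (s : ℝ) :
    ‖Sfree d x y s‖ = (4 * Real.pi * |s|) ^ (-((d : ℝ) / 2)) := by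
  have hexp : -(d : ℂ) / 2 = ((-((d : ℝ) / 2) : ℝ) : ℂ) := by push_cast; ring
  rw [Sfree_eq, norm_mul, hexp, norm_cpow_real, norm_exp_ofReal_mul_I, mul_one]
  simp [abs_of_pos Real.pi_pos]

theorem measurable_Sfree :
    Measurable fun p : (Fin d → ℝ) × (Fin d → ℝ) × ℝ => Sfree d p.1 p.2.1 p.2.2 := by
  unfold Sfree
  fun_prop

theorem exp_mul_Sfree_mul_conj (δ s s' : ℝ) (x y y' : Fin d → ℝ) :
    (Real.exp (-(δ * euclideanSq x)) : ℂ) * (Sfree d x y s * starRingEnd ℂ (Sfree d x y' s'))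
      = (4 * (Real.pi : ℂ) * I * s) ^ (-(d : ℂ) / 2) *
        starRingEnd ℂ ((4 * (Real.pi : ℂ) * I * s') ^ (-(d : ℂ) / 2)) *
        cexp ((euclideanSq y / (4 * s) - euclideanSq y' / (4 * s') : ℝ) * I) *
        cexp (-gaussianParam δ s s' * ∑ i, (x i : ℂ) ^ 2 +
          ∑ i, -((y i / (2 * s) - y' i / (2 * s') : ℝ) : ℂ) * I * x i) := by
  rw [Sfree_eq, Sfree_eq, map_mul, ← exp_conj, map_mul, conj_ofReal, conj_I, ofReal_exp]
  have hphase : ((-(δ * euclideanSq x) : ℝ) : ℂ) + (euclideanSq (x - y) / (4 * s) : ℝ) * I +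
      (euclideanSq (x - y') / (4 * s') : ℝ) * -I =
      (euclideanSq y / (4 * s) - euclideanSq y' / (4 * s') : ℝ) * I +
      (-gaussianParam δ s s' * ∑ i, (x i : ℂ) ^ 2 +
        ∑ i, -((y i / (2 * s) - y' i / (2 * s') : ℝ) : ℂ) * I * x i) := by
    simp only [gaussianParam, euclideanSq, Pi.sub_apply]
    push_cast
    simp only [Finset.mul_sum, Finset.sum_mul, Finset.sum_div, ← Finset.sum_neg_distrib,
      ← Finset.sum_add_distrib, ← Finset.sum_sub_distrib]
    refine Finset.sum_congr rfl fun i _ => ?_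
    ring
  rw [mul_assoc _ (cexp _) (cexp _), ← Complex.exp_add, ← hphase, Complex.exp_add, Complex.exp_add]
  ring

theorem re_sum_sq_div_gaussianParam (δ s s' : ℝ) (w : Fin d → ℝ) :
    ((∑ i, (-(w i : ℂ) * I) ^ 2) / (4 * gaussianParam δ s s')).re
      = -(δ / (4 * ‖gaussianParam δ s s'‖ ^ 2) * euclideanSq w) := by
  have hsum : ∑ i, (-(w i : ℂ) * I) ^ 2 = ((-euclideanSq w : ℝ) : ℂ) := by
    simp only [euclideanSq, mul_pow, I_sq, mul_neg_one, neg_sq, Finset.sum_neg_distrib]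
    push_cast
    rfl
  rw [hsum, div_eq_mul_inv, re_ofReal_mul, mul_inv, ← ofReal_ofNat, ← ofReal_inv, re_ofReal_mul,
    inv_re, gaussianParam_re, normSq_eq_norm_sq]
  ring

theorem norm_integral_Sfree_mul_conj (hδ : 0 < δ) (s s' : ℝ) (y y' : Fin d → ℝ) :
    ‖∫ x, Sfree d x y s * starRingEnd ℂ (Sfree d x y' s') ∂dampedMeasure volume euclideanSq δ‖
      = (16 * Real.pi * |s| * |s'| * ‖gaussianParam δ s s'‖) ^ (-((d : ℝ) / 2)) *
        Real.exp (-(δ / (4 * ‖gaussianParam δ s s'‖ ^ 2) *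
          euclideanSq fun i => y i / (2 * s) - y' i / (2 * s'))) := by
  set b := gaussianParam δ s s' with hb
  have hb_re : 0 < b.re := gaussianParam_re.symm ▸ hδ
  have hb_norm : 0 < ‖b‖ := norm_gaussianParam_pos hδ
  have hdiv : (d : ℂ) / 2 = (((d : ℝ) / 2 : ℝ) : ℂ) := by push_cast; ring
  have hneg : -(d : ℂ) / 2 = ((-((d : ℝ) / 2) : ℝ) : ℂ) := by push_cast; ring
  rw [integral_dampedMeasure measurable_euclideanSq]
  simp_rw [exp_mul_Sfree_mul_conj]
  rw [integral_const_mul, GaussianFourier.integral_cexp_neg_mul_sum_add hb_re, Fintype.card_fin,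
    norm_mul, norm_mul, norm_mul, norm_mul, RCLike.norm_conj, norm_exp_ofReal_mul_I, mul_one,
    Complex.norm_exp, re_sum_sq_div_gaussianParam, ← hb, ← mul_assoc, hneg, hdiv, norm_cpow_real,
    norm_cpow_real, norm_cpow_real]
  congr 1
  simp only [norm_mul, norm_div, norm_real, norm_I, Complex.norm_ofNat, Real.norm_eq_abs,
    abs_of_pos Real.pi_pos, mul_one]
  have hinv : (Real.pi / ‖b‖) ^ ((d : ℝ) / 2) = (‖b‖ / Real.pi) ^ (-((d : ℝ) / 2)) := by
    rw [Real.rpow_neg (by positivity), ← Real.inv_rpow (by positivity), inv_div]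
  rw [hinv, ← Real.mul_rpow (by positivity) (by positivity),
    ← Real.mul_rpow (by positivity) (by positivity)]
  congr 1
  field_simp
  ring

theorem norm_integral_Sfree_mul_conj_le (hδ : 0 < δ) (hs : s ≠ 0) (hs' : s' ≠ 0) (hss' : s ≠ s')
    (y y' : Fin d → ℝ) :
    ‖∫ x, Sfree d x y s * starRingEnd ℂ (Sfree d x y' s') ∂dampedMeasure volume euclideanSq δ‖
      ≤ (4 * Real.pi * |s - s'|) ^ (-((d : ℝ) / 2)) := by
  have : 0 < |s - s'| := abs_pos.2 (sub_ne_zero.2 hss')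
  have hexp : Real.exp (-(δ / (4 * ‖gaussianParam δ s s'‖ ^ 2) *
      euclideanSq fun i => y i / (2 * s) - y' i / (2 * s'))) ≤ 1 := by
    rw [Real.exp_le_one_iff, neg_nonpos, euclideanSq]
    positivity
  rw [norm_integral_Sfree_mul_conj hδ]
  refine (mul_le_of_le_one_right (by positivity) hexp).trans
    (Real.rpow_le_rpow_of_nonpos (by positivity) ?_ (neg_nonpos.2 (by positivity)))
  nlinarith [abs_sub_le_mul_norm_gaussianParam (δ := δ) hs hs', Real.pi_pos]

theorem exists_enorm_integral_Sfree_mul_conj_self_eq (hδ : 0 < δ) (hs : s ≠ 0) :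
    ∃ k : (Fin d → ℝ) → ℝ≥0∞, Measurable k ∧ ∫⁻ y, k y = 1 ∧ ∀ y y',
      ‖∫ x, Sfree d x y s * starRingEnd ℂ (Sfree d x y' s) ∂dampedMeasure volume euclideanSq δ‖ₑ
        = k (y - y') := by
  have hc : 0 < 1 / (16 * s ^ 2 * δ) := by positivity
  refine ⟨fun y => ENNReal.ofReal ((Real.pi / (1 / (16 * s ^ 2 * δ))) ^ (-((d : ℝ) / 2))) *
    ENNReal.ofReal (Real.exp (-(1 / (16 * s ^ 2 * δ) * euclideanSq y))),
    by have := measurable_euclideanSq (d := d); fun_prop, ?_, fun y y' => ?_⟩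
  · rw [lintegral_const_mul' _ _ ENNReal.ofReal_ne_top, lintegral_exp_neg_mul_euclideanSq hc,
      ← ENNReal.ofReal_mul (by positivity), ← Real.rpow_add (by positivity), neg_add_cancel,
      Real.rpow_zero, ENNReal.ofReal_one]
  · rw [← ofReal_norm, norm_integral_Sfree_mul_conj hδ, gaussianParam_self, norm_real,
      Real.norm_of_nonneg hδ.le, ENNReal.ofReal_mul (by positivity)]
    congr 3
    · rw [← sq_abs s]
      field_simp
    · simp only [euclideanSq, Finset.mul_sum]
      congr 1
      refine Finset.sum_congr rfl fun i _ => ?_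
      simp only [Pi.sub_apply]
      field_simp
      ring

end GaussianPairing

section Schur

variable {α : Type*} [MeasurableSpace α] {μ : Measure α}

theorem lintegral_lintegral_mul_mul_le [SFinite μ] {k : α → α → ℝ≥0∞} {F : α → ℝ≥0∞}
    (hk : Measurable (Function.uncurry k)) (hF : Measurable F) (hleft : ∀ y, ∫⁻ x, k x y ∂μ ≤ 1)
    (hright : ∀ x, ∫⁻ y, k x y ∂μ ≤ 1) :
    ∫⁻ x, ∫⁻ y, F x * F y * k x y ∂μ ∂μ ≤ ∫⁻ x, F x ^ (2 : ℝ) ∂μ := by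
  have hyoung : ∀ x y, F x * F y * k x y ≤ F x ^ (2 : ℝ) / 2 * k x y + F y ^ (2 : ℝ) / 2 * k x y :=
    fun x y => by
      rw [← add_mul]
      gcongr
      simpa using ENNReal.young_inequality (F x) (F y) Real.HolderConjugate.two_two
  have hfirst : ∫⁻ x, ∫⁻ y, F x ^ (2 : ℝ) / 2 * k x y ∂μ ∂μ ≤ ∫⁻ x, F x ^ (2 : ℝ) / 2 ∂μ :=
    lintegral_mono fun x => by
      rw [lintegral_const_mul _ hk.of_uncurry_left]
      exact mul_le_of_le_one_right' (hright x)
  have hsecond : ∫⁻ x, ∫⁻ y, F y ^ (2 : ℝ) / 2 * k x y ∂μ ∂μ ≤ ∫⁻ y, F y ^ (2 : ℝ) / 2 ∂μ := by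
    rw [lintegral_lintegral_swap (by fun_prop)]
    refine lintegral_mono fun y => ?_
    rw [lintegral_const_mul _ hk.of_uncurry_right]
    exact mul_le_of_le_one_right' (hleft y)
  calc ∫⁻ x, ∫⁻ y, F x * F y * k x y ∂μ ∂μ
      ≤ ∫⁻ x, ∫⁻ y, (F x ^ (2 : ℝ) / 2 * k x y + F y ^ (2 : ℝ) / 2 * k x y) ∂μ ∂μ :=
        lintegral_mono fun x => lintegral_mono fun y => hyoung x y
    _ = ∫⁻ x, ∫⁻ y, F x ^ (2 : ℝ) / 2 * k x y ∂μ ∂μ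
          + ∫⁻ x, ∫⁻ y, F y ^ (2 : ℝ) / 2 * k x y ∂μ ∂μ := by
        rw [← lintegral_add_left (by fun_prop)]
        exact lintegral_congr fun x => lintegral_add_left (by fun_prop) _
    _ ≤ ∫⁻ x, F x ^ (2 : ℝ) / 2 ∂μ + ∫⁻ x, F x ^ (2 : ℝ) / 2 ∂μ := add_le_add hfirst hsecond
    _ = ∫⁻ x, F x ^ (2 : ℝ) ∂μ := by
        rw [← lintegral_add_left (by fun_prop)]
        exact lintegral_congr fun x => ENNReal.add_halves _

end Schur

section FreePropagator

variable {d : ℕ} {s s' δ r r' : ℝ} {f g : (Fin d → ℝ) → ℂ}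

/-- The free Schrödinger propagator `e^{isΔ}` on `ℝ^d`, for `s ≠ 0`. -/
def freePropagator (d : ℕ) (s : ℝ) (f : (Fin d → ℝ) → ℂ) (x : Fin d → ℝ) : ℂ :=
  ∫ y, Sfree d x y s * f y

theorem integrable_Sfree_mul (hf : Integrable f) (s : ℝ) (x : Fin d → ℝ) :
    Integrable fun y => Sfree d x y s * f y :=
  hf.bdd_mul (measurable_Sfree.comp (f := fun y => (x, y, s)) (by fun_prop)).aestronglyMeasurable
    (.of_forall fun y => (norm_Sfree x y s).le)

theorem freePropagator_add (hf : Integrable f) (hg : Integrable g) (s : ℝ) :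
    freePropagator d s (f + g) = freePropagator d s f + freePropagator d s g := by
  ext x
  simp only [freePropagator, Pi.add_apply, mul_add]
  exact integral_add (integrable_Sfree_mul hf s x) (integrable_Sfree_mul hg s x)

theorem freePropagator_congr_ae (hfg : f =ᵐ[volume] g) :
    freePropagator d s f = freePropagator d s g :=
  funext fun x => integral_congr_ae (hfg.mono fun y hy => by simp only [hy])

theorem lintegral_enorm_Sfree_mul (s : ℝ) (f : (Fin d → ℝ) → ℂ) (x : Fin d → ℝ) :
    ∫⁻ y, ‖Sfree d x y s * f y‖ₑ
      = ENNReal.ofReal ((4 * Real.pi * |s|) ^ (-((d : ℝ) / 2))) * ∫⁻ y, ‖f y‖ₑ := by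
  simp only [enorm_mul, ← ofReal_norm (Sfree _ _ _ _), norm_Sfree]
  exact lintegral_const_mul' _ _ ENNReal.ofReal_ne_top

theorem enorm_freePropagator_le (s : ℝ) (f : (Fin d → ℝ) → ℂ) (x : Fin d → ℝ) :
    ‖freePropagator d s f x‖ₑ
      ≤ ENNReal.ofReal ((4 * Real.pi * |s|) ^ (-((d : ℝ) / 2))) * ∫⁻ y, ‖f y‖ₑ :=
  (enorm_integral_le_lintegral_enorm _).trans_eq (lintegral_enorm_Sfree_mul s f x)

theorem continuous_freePropagator (hf : Integrable f) (s : ℝ) :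
    Continuous (freePropagator d s f) := by
  refine continuous_of_dominated (fun x => (integrable_Sfree_mul hf s x).aestronglyMeasurable)
    (bound := fun y => (4 * Real.pi * |s|) ^ (-((d : ℝ) / 2)) * ‖f y‖)
    (fun x => .of_forall fun y => by rw [norm_mul, norm_Sfree]) (hf.norm.const_mul _)
    (.of_forall fun y => ?_)
  unfold Sfree
  fun_prop

theorem lintegral_enorm_freePropagator_rpow_two_le_of_measurable (hs : s ≠ 0)
    (hf_meas : Measurable f) (hf : Integrable f) :
    ∫⁻ x, ‖freePropagator d s f x‖ₑ ^ (2 : ℝ) ≤ ∫⁻ y, ‖f y‖ₑ ^ (2 : ℝ) := by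
  refine lintegral_le_of_forall_dampedMeasure_le measurable_euclideanSq
    ((continuous_freePropagator hf s).measurable.enorm.pow_const 2) fun δ hδ => ?_
  have := isFiniteMeasure_dampedMeasure_euclideanSq (d := d) hδ
  have hh : Measurable (Function.uncurry fun x y => Sfree d x y s * f y) :=
    (measurable_Sfree.comp (f := fun p : (Fin d → ℝ) × (Fin d → ℝ) => (p.1, p.2, s))
      (by fun_prop)).mul (hf_meas.comp measurable_snd)
  refine (lintegral_enorm_integral_rpow_two_le hh ?_).trans ?_
  · simp only [lintegral_enorm_Sfree_mul, lintegral_const]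
    have := hf.2.ne
    finiteness
  obtain ⟨k, hk_meas, hk_one, hk⟩ := exists_enorm_integral_Sfree_mul_conj_self_eq (d := d) hδ hs
  have hpair : ∀ y y', ‖∫ x, Sfree d x y s * f y * starRingEnd ℂ (Sfree d x y' s * f y')
      ∂dampedMeasure volume euclideanSq δ‖ₑ = ‖f y‖ₑ * ‖f y'‖ₑ * k (y - y') := fun y y' => by
    rw [← hk, ← RCLike.enorm_conj (f y'), ← enorm_mul, ← enorm_mul, ← integral_const_mul]
    congr 2 with x
    rw [map_mul]
    ring
  simp only [hpair]
  refine lintegral_lintegral_mul_mul_le (by unfold Function.uncurry; fun_prop) (by fun_prop)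
    (fun y => ?_) fun y => ?_
  · rw [lintegral_sub_right_eq_self k, hk_one]
  · rw [lintegral_sub_left_eq_self k, hk_one]

theorem lintegral_enorm_freePropagator_rpow_two_le (hs : s ≠ 0) (hf : Integrable f) :
    ∫⁻ x, ‖freePropagator d s f x‖ₑ ^ (2 : ℝ) ≤ ∫⁻ y, ‖f y‖ₑ ^ (2 : ℝ) := by
  have hae := hf.1.ae_eq_mk
  have hnorm : ∫⁻ y, ‖f y‖ₑ ^ (2 : ℝ) = ∫⁻ y, ‖hf.1.mk f y‖ₑ ^ (2 : ℝ) :=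
    lintegral_congr_ae (hae.mono fun y hy => by simp only [← hy])
  rw [freePropagator_congr_ae hae, hnorm]
  exact lintegral_enorm_freePropagator_rpow_two_le_of_measurable hs
    hf.1.stronglyMeasurable_mk.measurable (hf.congr hae)

theorem isDispersive_freePropagator (hs : s ≠ 0) :
    IsDispersive (fun f x => ‖freePropagator d s f x‖ₑ)
      ((4 * Real.pi * |s|) ^ (-((d : ℝ) / 2))) volume volume where
  aemeasurable f hf := (continuous_freePropagator hf s).aemeasurable.enorm
  add_le f g hf hg x := by
    rw [freePropagator_add hf hg]
    exact enorm_add_le _ _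
  le_mul_lintegral f _ x := enorm_freePropagator_le s f x
  lintegral_rpow_two_le f hf := lintegral_enorm_freePropagator_rpow_two_le hs hf

theorem integral_freePropagator_mul (hf : Integrable f) (hg : Integrable g) (s : ℝ) :
    ∫ x, freePropagator d s f x * g x = ∫ y, f y * freePropagator d s g y := by
  have hint : Integrable (Function.uncurry fun x y => Sfree d x y s * (g x * f y))
      (volume.prod volume) :=
    (hg.mul_prod hf).bdd_mul (measurable_Sfree.comp
      (f := fun p : (Fin d → ℝ) × (Fin d → ℝ) => (p.1, p.2, s)) (by fun_prop)).aestronglyMeasurable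
      (.of_forall fun p => (norm_Sfree p.1 p.2 s).le)
  calc ∫ x, freePropagator d s f x * g x
      = ∫ x, ∫ y, Sfree d x y s * (g x * f y) := by
        simp only [freePropagator, ← integral_mul_const]
        congr! 4
        ring
    _ = ∫ y, ∫ x, Sfree d x y s * (g x * f y) := integral_integral_swap hint
    _ = ∫ y, f y * freePropagator d s g y := by
        refine integral_congr_ae (.of_forall fun y => ?_)
        simp only [freePropagator, ← integral_const_mul, Sfree_comm y]
        congr! 2
        ring

/-- The operator `e^{is'Δ} e^{-δ|x|²} conj(e^{isΔ} f)`. By duality the damped pairing of `e^{isΔ} f`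
with `e^{is'Δ} g` is the pairing of this function with `g`. -/
def dampedPropagator (d : ℕ) (δ s s' : ℝ) (f : (Fin d → ℝ) → ℂ) : (Fin d → ℝ) → ℂ :=
  freePropagator d s' fun x =>
    (Real.exp (-(δ * euclideanSq x)) : ℂ) * starRingEnd ℂ (freePropagator d s f x)

theorem integrable_exp_mul_conj_freePropagator (hδ : 0 < δ) (hf : Integrable f) (s : ℝ) :
    Integrable fun x =>
      (Real.exp (-(δ * euclideanSq x)) : ℂ) * starRingEnd ℂ (freePropagator d s f x) := by
  refine (integrable_exp_neg_mul_euclideanSq hδ).ofReal.mul_bdd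
    (c := (4 * Real.pi * |s|) ^ (-((d : ℝ) / 2)) * ∫ y, ‖f y‖)
    (continuous_conj.comp (continuous_freePropagator hf s)).aestronglyMeasurable
    (.of_forall fun x => ?_)
  rw [RCLike.norm_conj, ← integral_const_mul]
  refine (norm_integral_le_integral_norm _).trans_eq (integral_congr_ae (.of_forall fun y => ?_))
  simp only [norm_mul, norm_Sfree]

theorem dampedPropagator_add (hδ : 0 < δ) (hf : Integrable f) (hg : Integrable g) (s s' : ℝ) :
    dampedPropagator d δ s s' (f + g)
      = dampedPropagator d δ s s' f + dampedPropagator d δ s s' g := by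
  rw [dampedPropagator, dampedPropagator, dampedPropagator, ← freePropagator_add
    (integrable_exp_mul_conj_freePropagator hδ hf s)
    (integrable_exp_mul_conj_freePropagator hδ hg s), freePropagator_add hf hg]
  congr 1
  ext x
  simp only [Pi.add_apply, map_add, mul_add]

theorem conj_dampedPropagator (hδ : 0 < δ) (hf : Integrable f) (s s' : ℝ) (y' : Fin d → ℝ) :
    starRingEnd ℂ (dampedPropagator d δ s s' f y') = ∫ y, f y *
      ∫ x, Sfree d x y s * starRingEnd ℂ (Sfree d x y' s') ∂dampedMeasure volume euclideanSq δ := by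
  let G : (Fin d → ℝ) → ℂ := fun x =>
    (Real.exp (-(δ * euclideanSq x)) : ℂ) * starRingEnd ℂ (Sfree d x y' s')
  have hG : Integrable G :=
    (integrable_exp_neg_mul_euclideanSq hδ).ofReal.mul_bdd
      (c := (4 * Real.pi * |s'|) ^ (-((d : ℝ) / 2)))
      (continuous_conj.measurable.comp (measurable_Sfree.comp
        (f := fun x => (x, y', s')) (by fun_prop))).aestronglyMeasurable
      (.of_forall fun x => by rw [RCLike.norm_conj, norm_Sfree])
  calc starRingEnd ℂ (dampedPropagator d δ s s' f y')
      = ∫ x, freePropagator d s f x * G x := by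
        rw [dampedPropagator, freePropagator, ← integral_conj]
        refine integral_congr_ae (.of_forall fun x => ?_)
        simp only [G, map_mul, conj_ofReal, conj_conj, Sfree_comm y']
        ring
    _ = ∫ y, f y * freePropagator d s G y := integral_freePropagator_mul hf hG s
    _ = _ := by
        refine integral_congr_ae (.of_forall fun y => ?_)
        simp only [integral_dampedMeasure measurable_euclideanSq, freePropagator, G, Sfree_comm y]
        congr! 3
        ring

theorem isDispersive_dampedPropagator (hδ : 0 < δ) (hs : s ≠ 0) (hs' : s' ≠ 0) (hss' : s ≠ s') :
    IsDispersive (fun f x => ‖dampedPropagator d δ s s' f x‖ₑ)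
      ((4 * Real.pi * |s - s'|) ^ (-((d : ℝ) / 2))) volume volume where
  aemeasurable f hf := (continuous_freePropagator
    (integrable_exp_mul_conj_freePropagator hδ hf s) s').aemeasurable.enorm
  add_le f g hf hg x := by
    rw [dampedPropagator_add hδ hf hg]
    exact enorm_add_le _ _
  le_mul_lintegral f hf y' := by
    rw [← RCLike.enorm_conj, conj_dampedPropagator hδ hf,
      ← lintegral_const_mul' _ _ ENNReal.ofReal_ne_top]
    refine (enorm_integral_le_lintegral_enorm _).trans (lintegral_mono fun y => ?_)
    rw [enorm_mul, mul_comm, ← ofReal_norm (∫ x, _ ∂_)]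
    gcongr
    exact norm_integral_Sfree_mul_conj_le hδ hs hs' hss' y y'
  lintegral_rpow_two_le f hf := by
    refine (lintegral_enorm_freePropagator_rpow_two_le hs'
      (integrable_exp_mul_conj_freePropagator hδ hf s)).trans
      (le_trans (lintegral_mono fun x => ?_) (lintegral_enorm_freePropagator_rpow_two_le hs hf))
    have hexp : ‖(Real.exp (-(δ * euclideanSq x)) : ℂ)‖ₑ ≤ 1 := by
      rw [← ofReal_norm, norm_real, Real.norm_of_nonneg (Real.exp_nonneg _),
        ENNReal.ofReal_le_one, Real.exp_le_one_iff, neg_nonpos, euclideanSq]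
      positivity
    rw [enorm_mul, RCLike.enorm_conj]
    gcongr
    exact mul_le_of_le_one_left' hexp

theorem integral_freePropagator_mul_conj (hδ : 0 < δ) (hf : Integrable f) (hg : Integrable g)
    (s s' : ℝ) :
    ∫ x, freePropagator d s f x * starRingEnd ℂ (freePropagator d s' g x)
        ∂dampedMeasure volume euclideanSq δ
      = starRingEnd ℂ (∫ y, g y * dampedPropagator d δ s s' f y) := by
  rw [dampedPropagator, ← integral_freePropagator_mul hg
    (integrable_exp_mul_conj_freePropagator hδ hf s), ← integral_conj,
    integral_dampedMeasure measurable_euclideanSq]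
  refine integral_congr_ae (.of_forall fun x => ?_)
  simp only [map_mul, conj_ofReal, conj_conj]
  ring

/-- The constant in the dispersive estimates, `L^{r'} → L^r`, on `ℝ^d`. -/
def dispersiveConst (d : ℕ) (r : ℝ) : ℝ :=
  interpolationConst r * (4 * Real.pi) ^ (-((d : ℝ) * (1 / 2 - 1 / r)))

theorem dispersiveConst_pos (hr : 2 ≤ r) : 0 < dispersiveConst d r := by
  have := interpolationConst_pos hr
  unfold dispersiveConst
  positivity

theorem interpolationConst_mul_rpow_eq (d : ℕ) (r s : ℝ) :
    interpolationConst r * ((4 * Real.pi * |s|) ^ (-((d : ℝ) / 2))) ^ (1 - 2 / r)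
      = dispersiveConst d r * |s| ^ (-((d : ℝ) * (1 / 2 - 1 / r))) := by
  have hexp : -((d : ℝ) / 2) * (1 - 2 / r) = -((d : ℝ) * (1 / 2 - 1 / r)) := by ring
  rw [dispersiveConst, ← Real.rpow_mul (by positivity), hexp,
    Real.mul_rpow (x := 4 * Real.pi) (by positivity) (by positivity), mul_assoc]

theorem lintegral_enorm_freePropagator_rpow_one_div_le (hs : s ≠ 0) (hr : r.HolderConjugate r')
    (hr2 : 2 ≤ r) (hf : Integrable f) :
    (∫⁻ x, ‖freePropagator d s f x‖ₑ ^ r) ^ (1 / r)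
      ≤ ENNReal.ofReal (dispersiveConst d r * |s| ^ (-((d : ℝ) * (1 / 2 - 1 / r)))) *
        (∫⁻ y, ‖f y‖ₑ ^ r') ^ (1 / r') := by
  rw [← interpolationConst_mul_rpow_eq]
  exact (isDispersive_freePropagator hs).lintegral_rpow_one_div_le (by positivity) hr hr2 hf

theorem enorm_integral_freePropagator_mul_conj_le (hδ : 0 < δ) (hs : s ≠ 0) (hs' : s' ≠ 0)
    (hss' : s ≠ s') (hr : r.HolderConjugate r') (hr2 : 2 ≤ r) (hf : Integrable f)
    (hg : Integrable g) :
    ‖∫ x, freePropagator d s f x * starRingEnd ℂ (freePropagator d s' g x)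
        ∂dampedMeasure volume euclideanSq δ‖ₑ
      ≤ ENNReal.ofReal (dispersiveConst d r * |s - s'| ^ (-((d : ℝ) * (1 / 2 - 1 / r)))) *
        ((∫⁻ y, ‖f y‖ₑ ^ r') ^ (1 / r') * (∫⁻ y, ‖g y‖ₑ ^ r') ^ (1 / r')) := by
  have hV := isDispersive_dampedPropagator (d := d) hδ hs hs' hss'
  have : 0 < |s - s'| := abs_pos.2 (sub_ne_zero.2 hss')
  rw [integral_freePropagator_mul_conj hδ hf hg, RCLike.enorm_conj]
  calc ‖∫ y, g y * dampedPropagator d δ s s' f y‖ₑ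
      ≤ ∫⁻ y, ‖g y‖ₑ * ‖dampedPropagator d δ s s' f y‖ₑ :=
        (enorm_integral_le_lintegral_enorm _).trans_eq (by simp only [enorm_mul])
    _ ≤ (∫⁻ y, ‖g y‖ₑ ^ r') ^ (1 / r') *
          (∫⁻ y, ‖dampedPropagator d δ s s' f y‖ₑ ^ r) ^ (1 / r) :=
        ENNReal.lintegral_mul_le_Lp_mul_Lq _ hr.symm hg.aestronglyMeasurable.enorm
          (hV.aemeasurable f hf)
    _ ≤ (∫⁻ y, ‖g y‖ₑ ^ r') ^ (1 / r') *
          (ENNReal.ofReal (dispersiveConst d r * |s - s'| ^ (-((d : ℝ) * (1 / 2 - 1 / r)))) *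
            (∫⁻ y, ‖f y‖ₑ ^ r') ^ (1 / r')) := by
        rw [← interpolationConst_mul_rpow_eq]
        gcongr
        exact hV.lintegral_rpow_one_div_le (by positivity) hr hr2 hf
    _ = _ := by ring

end FreePropagator

section HalfLine

variable {a b δ : ℝ}

/-- The measure `z^a dz` on `(0, ∞)`, the vertical factor of `ωa`. -/
def halfLineMeasure (a : ℝ) : Measure ℝ :=
  (volume.restrict (Set.Ioi 0)).withDensity fun z => ENNReal.ofReal (z ^ a)

instance : SFinite (halfLineMeasure a) := by
  unfold halfLineMeasure
  infer_instance

theorem ωa_eq_prod (d : ℕ) (a : ℝ) : ωa d a = volume.prod (halfLineMeasure a) := rfl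

theorem lintegral_halfLineMeasure (a : ℝ) {f : ℝ → ℝ} (hf : Measurable f) :
    ∫⁻ z, ENNReal.ofReal (f z) ∂halfLineMeasure a
      = ∫⁻ z in Set.Ioi (0 : ℝ), ENNReal.ofReal (z ^ a * f z) := by
  rw [halfLineMeasure, lintegral_withDensity_eq_lintegral_mul _ (by fun_prop) (by fun_prop)]
  refine setLIntegral_congr_fun measurableSet_Ioi fun z hz => ?_
  exact (ENNReal.ofReal_mul (Real.rpow_nonneg (le_of_lt hz) a)).symm

theorem integrable_exp_neg_mul_sq_halfLineMeasure (ha : -1 < a) (hb : 0 < b) :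
    Integrable (fun z => Real.exp (-b * z ^ 2)) (halfLineMeasure a) := by
  refine ⟨by fun_prop, ?_⟩
  rw [hasFiniteIntegral_iff_ofReal (.of_forall fun z => Real.exp_nonneg _),
    lintegral_halfLineMeasure a (by fun_prop)]
  exact (integrableOn_rpow_mul_exp_neg_mul_sq hb ha).lintegral_lt_top

theorem isFiniteMeasure_dampedMeasure_halfLineMeasure (ha : -1 < a) (hδ : 0 < δ) :
    IsFiniteMeasure (dampedMeasure (halfLineMeasure a) (· ^ 2) δ) := by
  refine isFiniteMeasure_withDensity_ofReal ?_
  simpa only [neg_mul] using (integrable_exp_neg_mul_sq_halfLineMeasure ha hδ).2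

theorem mgf_sq_halfLineMeasure (ha : -1 < a) (hb : 0 < b) :
    ProbabilityTheory.mgf (· ^ 2) (halfLineMeasure a) (-b)
      = Real.Gamma ((a + 1) / 2) / 2 * b ^ (-((a + 1) / 2)) := by
  have hgamma := integral_rpow_mul_exp_neg_mul_rpow (p := 2) two_pos ha hb
  rw [ProbabilityTheory.mgf, integral_eq_lintegral_of_nonneg_ae
    (.of_forall fun z => Real.exp_nonneg _) (by fun_prop),
    lintegral_halfLineMeasure a (by fun_prop)]
  rw [← integral_eq_lintegral_of_nonneg_ae _ (by fun_prop)]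
  · simp only [Real.rpow_two] at hgamma
    rw [hgamma, neg_div]
    ring
  · filter_upwards [ae_restrict_mem measurableSet_Ioi] with z hz
    exact mul_nonneg (Real.rpow_nonneg (le_of_lt hz) a) (Real.exp_nonneg _)

theorem complexMGF_sq_halfLineMeasure (ha : -1 < a) {w : ℂ} (hw : 0 < w.re) :
    ProbabilityTheory.complexMGF (· ^ 2) (halfLineMeasure a) (-w)
      = (Real.Gamma ((a + 1) / 2) / 2 : ℝ) * w ^ ((-((a + 1) / 2) : ℝ) : ℂ) := by
  have hneg : Set.Iio 0 ⊆
      interior (ProbabilityTheory.integrableExpSet (· ^ 2) (halfLineMeasure a)) := by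
    refine interior_maximal (fun x hx => ?_) isOpen_Iio
    simpa only [neg_neg, ProbabilityTheory.integrableExpSet] using!
      integrable_exp_neg_mul_sq_halfLineMeasure ha (neg_pos.2 hx)
  have hleft : AnalyticOnNhd ℂ
      (fun w => ProbabilityTheory.complexMGF (· ^ 2) (halfLineMeasure a) (-w)) {w | 0 < w.re} :=
    fun w hw => (ProbabilityTheory.analyticAt_complexMGF
      (hneg (by simpa using hw))).comp analyticAt_id.neg
  have hright : AnalyticOnNhd ℂ (fun w : ℂ => (Real.Gamma ((a + 1) / 2) / 2 : ℝ) *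
      w ^ ((-((a + 1) / 2) : ℝ) : ℂ)) {w | 0 < w.re} :=
    fun w hw => analyticAt_const.mul (analyticAt_id.cpow analyticAt_const (.inl hw))
  refine hleft.eqOn_of_preconnected_of_frequently_eq hright
    (convex_halfSpace_re_gt 0).isPreconnected (z₀ := ((1 : ℝ) : ℂ)) (by simp) ?_ hw
  have hreal : Tendsto ((↑) : ℝ → ℂ) (𝓝[≠] 1) (𝓝[≠] ((1 : ℝ) : ℂ)) :=
    continuous_ofReal.continuousAt.continuousWithinAt.tendsto_nhdsWithin fun x hx => by
      simpa using hx
  have hpos : ∀ᶠ x : ℝ in 𝓝[≠] 1, 0 < x := nhdsWithin_le_nhds (eventually_gt_nhds one_pos)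
  refine hreal.frequently (hpos.mono fun x hx => ?_).frequently
  rw [← ofReal_neg, ProbabilityTheory.complexMGF_ofReal, mgf_sq_halfLineMeasure ha hx,
    ← ofReal_cpow hx.le, ofReal_mul]

/-- The constant `2^{-a} / Γ((a+1)/2)` in the boundary kernel `Sa0`. -/
def boundaryKernelConst (a : ℝ) : ℝ := 2 ^ (-a) / Real.Gamma ((a + 1) / 2)

theorem boundaryKernelConst_pos (ha : -1 < a) : 0 < boundaryKernelConst a := by
  have := Real.Gamma_pos_of_pos (show 0 < (a + 1) / 2 by linarith)
  unfold boundaryKernelConst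
  positivity

theorem Sa0_eq (a z s : ℝ) :
    Sa0 a z s = (boundaryKernelConst a * |s| ^ (-((a + 1) / 2)) : ℝ) *
      cexp ((-(Real.sign s * ((a + 1) * Real.pi / 4)) : ℝ) * I) *
      cexp ((z ^ 2 / (4 * s) : ℝ) * I) := by
  rw [Sa0, boundaryKernelConst]
  push_cast
  ring_nf

theorem norm_Sa0 (ha : -1 < a) (z s : ℝ) :
    ‖Sa0 a z s‖ = boundaryKernelConst a * |s| ^ (-((a + 1) / 2)) := by
  have := boundaryKernelConst_pos ha
  rw [Sa0_eq, norm_mul, norm_mul, norm_exp_ofReal_mul_I, norm_exp_ofReal_mul_I, norm_real,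
    Real.norm_of_nonneg (by positivity), mul_one, mul_one]

theorem Sa0_zero_right (ha : -1 < a) (z : ℝ) : Sa0 a z 0 = 0 := by
  rw [← norm_eq_zero, norm_Sa0 ha, abs_zero, Real.zero_rpow (by linarith), mul_zero]

theorem measurable_Sa0 (a : ℝ) : Measurable fun p : ℝ × ℝ => Sa0 a p.1 p.2 := by
  have hsign : Measurable Real.sign := by
    unfold Real.sign
    exact .ite measurableSet_Iio measurable_const
      (.ite measurableSet_Ioi measurable_const measurable_const)
  unfold Sa0
  fun_prop

theorem exp_mul_Sa0_mul_conj (a δ s s' z : ℝ) :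
    (Real.exp (-(δ * z ^ 2)) : ℂ) * (Sa0 a z s * starRingEnd ℂ (Sa0 a z s'))
      = Sa0 a 0 s * starRingEnd ℂ (Sa0 a 0 s') * cexp (-gaussianParam δ s s' * (z ^ 2 : ℝ)) := by
  have hphase : cexp (-gaussianParam δ s s' * (z ^ 2 : ℝ)) = (Real.exp (-(δ * z ^ 2)) : ℂ) *
      (cexp ((z ^ 2 / (4 * s) : ℝ) * I) * starRingEnd ℂ (cexp ((z ^ 2 / (4 * s') : ℝ) * I))) := by
    rw [← exp_conj, map_mul, conj_ofReal, conj_I, ofReal_exp, ← Complex.exp_add,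
      ← Complex.exp_add, gaussianParam]
    push_cast
    ring_nf
  rw [hphase]
  simp only [Sa0_eq, map_mul, ne_eq, OfNat.ofNat_ne_zero, not_false_eq_true, zero_pow, zero_div,
    ofReal_zero, zero_mul, Complex.exp_zero, mul_one]
  ring

theorem norm_integral_Sa0_mul_conj (ha : -1 < a) (hδ : 0 < δ) (s s' : ℝ) :
    ‖∫ z, Sa0 a z s * starRingEnd ℂ (Sa0 a z s') ∂dampedMeasure (halfLineMeasure a) (· ^ 2) δ‖
      = boundaryKernelConst a ^ 2 * (Real.Gamma ((a + 1) / 2) / 2) *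
        (|s| * |s'| * ‖gaussianParam δ s s'‖) ^ (-((a + 1) / 2)) := by
  have hgamma := Real.Gamma_pos_of_pos (show 0 < (a + 1) / 2 by linarith)
  have hmgf := complexMGF_sq_halfLineMeasure ha (w := gaussianParam δ s s')
    (by rwa [gaussianParam_re])
  rw [ProbabilityTheory.complexMGF] at hmgf
  rw [integral_dampedMeasure (by fun_prop)]
  simp only [exp_mul_Sa0_mul_conj]
  rw [integral_const_mul, hmgf, norm_mul, norm_mul, norm_mul, RCLike.norm_conj, norm_Sa0 ha,
    norm_Sa0 ha, norm_cpow_real, norm_real, Real.norm_of_nonneg (by positivity),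
    Real.mul_rpow (by positivity) (norm_nonneg _), Real.mul_rpow (abs_nonneg _) (abs_nonneg _)]
  ring

/-- The constant of the dispersive estimate `norm_integral_Sa0_mul_conj_le` for the boundary
kernel. -/
def boundaryDispersiveConst (a : ℝ) : ℝ :=
  boundaryKernelConst a ^ 2 * (Real.Gamma ((a + 1) / 2) / 2) * 4 ^ ((a + 1) / 2)

theorem boundaryDispersiveConst_pos (ha : -1 < a) : 0 < boundaryDispersiveConst a := by
  have := boundaryKernelConst_pos ha
  have := Real.Gamma_pos_of_pos (show 0 < (a + 1) / 2 by linarith)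
  unfold boundaryDispersiveConst
  positivity

theorem norm_integral_Sa0_mul_conj_le (ha : -1 < a) (hδ : 0 < δ) {s s' : ℝ} (hs : s ≠ 0)
    (hs' : s' ≠ 0) (hss' : s ≠ s') :
    ‖∫ z, Sa0 a z s * starRingEnd ℂ (Sa0 a z s') ∂dampedMeasure (halfLineMeasure a) (· ^ 2) δ‖
      ≤ boundaryDispersiveConst a * |s - s'| ^ (-((a + 1) / 2)) := by
  have hgamma := Real.Gamma_pos_of_pos (show 0 < (a + 1) / 2 by linarith)
  have : 0 < |s - s'| := abs_pos.2 (sub_ne_zero.2 hss')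
  have hparam : |s - s'| / 4 ≤ |s| * |s'| * ‖gaussianParam δ s s'‖ := by
    linarith [abs_sub_le_mul_norm_gaussianParam (δ := δ) hs hs']
  calc _ = boundaryKernelConst a ^ 2 * (Real.Gamma ((a + 1) / 2) / 2) *
        (|s| * |s'| * ‖gaussianParam δ s s'‖) ^ (-((a + 1) / 2)) :=
        norm_integral_Sa0_mul_conj ha hδ s s'
    _ ≤ boundaryKernelConst a ^ 2 * (Real.Gamma ((a + 1) / 2) / 2) *
        (|s - s'| / 4) ^ (-((a + 1) / 2)) :=
        mul_le_mul_of_nonneg_left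
          (Real.rpow_le_rpow_of_nonpos (by positivity) hparam (by linarith)) (by positivity)
    _ = _ := by
        rw [Real.div_rpow (abs_nonneg _) (by norm_num), Real.rpow_neg (x := 4) (by norm_num),
          div_inv_eq_mul, boundaryDispersiveConst]
        ring

end HalfLine

section BoundaryData

variable {d : ℕ} {a q r : ℝ} {Φ : (Fin d → ℝ) → ℝ → ℂ}

/-- The spatial norm `‖Φ(·, t)‖_{L^r_x}`, whose `L^q` norm in `t` is `mixNorm d q r Φ`. -/
def sliceNorm (r : ℝ) (Φ : (Fin d → ℝ) → ℝ → ℂ) (t : ℝ) : ℝ≥0∞ :=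
  (∫⁻ x, ‖Φ x t‖ₑ ^ r) ^ (1 / r)

theorem measurable_sliceNorm (hΦ : Measurable (Function.uncurry Φ)) (r : ℝ) :
    Measurable (sliceNorm r Φ) :=
  (Measurable.lintegral_prod_left' (f := fun p : (Fin d → ℝ) × ℝ => ‖Φ p.1 p.2‖ₑ ^ r)
    (hΦ.enorm.pow_const r)).pow_const _

theorem mixNorm_eq (q r : ℝ) (Φ : (Fin d → ℝ) → ℝ → ℂ) :
    mixNorm d q r Φ = (∫⁻ t, sliceNorm r Φ t ^ q) ^ (1 / q) := by
  simp only [sliceNorm, ← ENNReal.rpow_mul, one_div_mul_eq_div]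
  rfl

/-- The class of boundary data for which the estimates are proved: it contains the Schwartz
functions, and all the integrals that occur in `ThetaStar` converge absolutely on it. -/
structure IsBoundaryDatum (Φ : (Fin d → ℝ) → ℝ → ℂ) : Prop where
  measurable : Measurable (Function.uncurry Φ)
  integrable : ∀ τ, Integrable fun y => Φ y τ
  exists_lintegral_rpow_two_le : ∃ B ≠ (⊤ : ℝ≥0∞), ∀ τ, ∫⁻ y, ‖Φ y τ‖ₑ ^ (2 : ℝ) ≤ B

/-- The contribution `S_a(z,0,t-τ) · e^{i(t-τ)Δ}Φ(·,τ)(x)` of the time `τ` to `Θ_a^*(Φ)(x,z,t)`. -/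
def boundaryDuhamel (a : ℝ) (Φ : (Fin d → ℝ) → ℝ → ℂ) (t : ℝ) (X : (Fin d → ℝ) × ℝ) (τ : ℝ) : ℂ :=
  Sa0 a X.2 (t - τ) * freePropagator d (t - τ) (fun y => Φ y τ) X.1

theorem enorm_ThetaStar (a : ℝ) (Φ : (Fin d → ℝ) → ℝ → ℂ) (X : (Fin d → ℝ) × ℝ) (t : ℝ) :
    ‖ThetaStar d a Φ X t‖ₑ = ‖∫ τ in Set.uIoc 0 t, boundaryDuhamel a Φ t X τ‖ₑ := by
  rw [ThetaStar, enorm_mul, ← ofReal_norm I, norm_I, ENNReal.ofReal_one, one_mul, ← ofReal_norm,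
    intervalIntegral.norm_intervalIntegral_eq, ofReal_norm]
  simp only [boundaryDuhamel, freePropagator, ← integral_const_mul, mul_assoc]

theorem measurable_freePropagator_slice (hΦ : Measurable (Function.uncurry Φ)) (t : ℝ) :
    Measurable fun p : (Fin d → ℝ) × ℝ => freePropagator d (t - p.2) (fun y => Φ y p.2) p.1 := by
  refine (StronglyMeasurable.integral_prod_right (Measurable.stronglyMeasurable
    (f := fun p : ((Fin d → ℝ) × ℝ) × (Fin d → ℝ) =>
      Sfree d p.1.1 p.2 (t - p.1.2) * Φ p.2 p.1.2) ?_)).measurable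
  exact (measurable_Sfree.comp (f := fun p : ((Fin d → ℝ) × ℝ) × (Fin d → ℝ) =>
    (p.1.1, p.2, t - p.1.2)) (by fun_prop)).mul
      (hΦ.comp (f := fun p : ((Fin d → ℝ) × ℝ) × (Fin d → ℝ) => (p.2, p.1.2)) (by fun_prop))

theorem measurable_boundaryDuhamel (hΦ : Measurable (Function.uncurry Φ)) (a t : ℝ) :
    Measurable (Function.uncurry (boundaryDuhamel a Φ t)) :=
  ((measurable_Sa0 a).comp
    (f := fun p : ((Fin d → ℝ) × ℝ) × ℝ => (p.1.2, t - p.2)) (by fun_prop)).mul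
    ((measurable_freePropagator_slice hΦ t).comp
      (f := fun p : ((Fin d → ℝ) × ℝ) × ℝ => (p.1.1, p.2)) (by fun_prop))

theorem boundaryDuhamel_self (ha : -1 < a) (Φ : (Fin d → ℝ) → ℝ → ℂ) (t : ℝ)
    (X : (Fin d → ℝ) × ℝ) : boundaryDuhamel a Φ t X t = 0 := by
  rw [boundaryDuhamel, sub_self, Sa0_zero_right ha, zero_mul]

theorem enorm_boundaryDuhamel (ha : -1 < a) (Φ : (Fin d → ℝ) → ℝ → ℂ) (t : ℝ)
    (X : (Fin d → ℝ) × ℝ) (τ : ℝ) : ‖boundaryDuhamel a Φ t X τ‖ₑ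
      = ENNReal.ofReal (boundaryKernelConst a * |t - τ| ^ (-((a + 1) / 2))) *
        ‖freePropagator d (t - τ) (fun y => Φ y τ) X.1‖ₑ := by
  rw [boundaryDuhamel, enorm_mul, ← ofReal_norm (Sa0 _ _ _), norm_Sa0 ha]

theorem rpow_mul_rpow_of_admissible (hadm : 2 / q + (d : ℝ) / r = ((d : ℝ) + a + 1) / 2) {s : ℝ}
    (hs : 0 < s) : s ^ (-((a + 1) / 2)) * s ^ (-((d : ℝ) * (1 / 2 - 1 / r))) = s ^ (-(2 / q)) := by
  rw [← Real.rpow_add hs]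
  congr 1
  linear_combination hadm

theorem lt_one_of_admissible (hr : 2 ≤ r) (hq : 2 < q)
    (hadm : 2 / q + (d : ℝ) / r = ((d : ℝ) + a + 1) / 2) : a < 1 := by
  have hq1 : 2 / q < 1 := (div_lt_one (by linarith)).2 hq
  have hdr : (d : ℝ) / r ≤ d / 2 := by gcongr
  linarith

theorem lintegral_const_mul_rpow_one_div {α : Type*} [MeasurableSpace α] {μ : Measure α}
    (hr : 0 < r) {c : ℝ≥0∞} (hc : c ≠ ⊤) (f : α → ℝ≥0∞) :
    (∫⁻ x, (c * f x) ^ r ∂μ) ^ (1 / r) = c * (∫⁻ x, f x ^ r ∂μ) ^ (1 / r) := by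
  simp_rw [ENNReal.mul_rpow_of_nonneg _ _ hr.le]
  rw [lintegral_const_mul' _ _ (ENNReal.rpow_ne_top_of_nonneg hr.le hc),
    ENNReal.mul_rpow_of_nonneg _ _ (by positivity), ← ENNReal.rpow_mul,
    mul_one_div_cancel hr.ne', ENNReal.rpow_one]

end BoundaryData

section BoundaryTrace

variable {d : ℕ} {a q q' r r' : ℝ} {Φ : (Fin d → ℝ) → ℝ → ℂ}

theorem lintegral_enorm_boundaryDuhamel_rpow_one_div_le (ha : -1 < a) (hr : r.HolderConjugate r')
    (hr2 : 2 ≤ r) (hadm : 2 / q + (d : ℝ) / r = ((d : ℝ) + a + 1) / 2) {τ : ℝ}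
    (hΦ : Integrable fun y => Φ y τ) (z t : ℝ) :
    (∫⁻ x, ‖boundaryDuhamel a Φ t (x, z) τ‖ₑ ^ r) ^ (1 / r)
      ≤ ENNReal.ofReal (boundaryKernelConst a * dispersiveConst d r) *
        (ENNReal.ofReal (|t - τ| ^ (-(2 / q))) * sliceNorm r' Φ τ) := by
  rcases eq_or_ne t τ with rfl | htτ
  · simp only [boundaryDuhamel_self ha, enorm_zero, ENNReal.zero_rpow_of_pos hr.pos, lintegral_zero,
      ENNReal.zero_rpow_of_pos (one_div_pos.2 hr.pos), zero_le]
  have hK := boundaryKernelConst_pos ha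
  have hs : 0 < |t - τ| := abs_pos.2 (sub_ne_zero.2 htτ)
  simp only [enorm_boundaryDuhamel ha]
  rw [lintegral_const_mul_rpow_one_div hr.pos ENNReal.ofReal_ne_top]
  calc _ ≤ ENNReal.ofReal (boundaryKernelConst a * |t - τ| ^ (-((a + 1) / 2))) *
        (ENNReal.ofReal (dispersiveConst d r * |t - τ| ^ (-((d : ℝ) * (1 / 2 - 1 / r)))) *
          sliceNorm r' Φ τ) := by
        gcongr
        exact lintegral_enorm_freePropagator_rpow_one_div_le (sub_ne_zero.2 htτ) hr hr2 hΦ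
    _ = _ := by
        have hD := dispersiveConst_pos (d := d) hr2
        rw [← rpow_mul_rpow_of_admissible hadm hs, ← mul_assoc, ← mul_assoc,
          ← ENNReal.ofReal_mul (by positivity), ← ENNReal.ofReal_mul (by positivity)]
        ring_nf

theorem sliceNorm_ThetaStar_le (ha : -1 < a) (hr : r.HolderConjugate r') (hr2 : 2 ≤ r)
    (hadm : 2 / q + (d : ℝ) / r = ((d : ℝ) + a + 1) / 2) (hΦ : IsBoundaryDatum Φ) (z t : ℝ) :
    sliceNorm r (fun x t => ThetaStar d a Φ (x, z) t) t
      ≤ ENNReal.ofReal (boundaryKernelConst a * dispersiveConst d r) *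
        ∫⁻ τ, ENNReal.ofReal (|t - τ| ^ (-(2 / q))) * sliceNorm r' Φ τ := by
  have hmeas : Measurable (Function.uncurry fun x τ => ‖boundaryDuhamel a Φ t (x, z) τ‖ₑ) :=
    ((measurable_boundaryDuhamel hΦ.measurable a t).comp
      (f := fun p : (Fin d → ℝ) × ℝ => ((p.1, z), p.2)) (by fun_prop)).enorm
  calc sliceNorm r (fun x t => ThetaStar d a Φ (x, z) t) t
      ≤ (∫⁻ x, (∫⁻ τ, ‖boundaryDuhamel a Φ t (x, z) τ‖ₑ) ^ r) ^ (1 / r) := by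
        unfold sliceNorm
        gcongr with x
        rw [enorm_ThetaStar]
        exact (enorm_integral_le_lintegral_enorm _).trans (setLIntegral_le_lintegral _ _)
    _ ≤ ∫⁻ τ, (∫⁻ x, ‖boundaryDuhamel a Φ t (x, z) τ‖ₑ ^ r) ^ (1 / r) :=
        lintegral_rpow_lintegral_le (by linarith) hmeas
    _ ≤ ∫⁻ τ, ENNReal.ofReal (boundaryKernelConst a * dispersiveConst d r) *
          (ENNReal.ofReal (|t - τ| ^ (-(2 / q))) * sliceNorm r' Φ τ) :=
        lintegral_mono fun τ => lintegral_enorm_boundaryDuhamel_rpow_one_div_le ha hr hr2 hadm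
          (hΦ.integrable τ) z t
    _ = _ := lintegral_const_mul' _ _ ENNReal.ofReal_ne_top

theorem exists_mixNorm_ThetaStar_le (ha : -1 < a) (hr : r.HolderConjugate r') (hr2 : 2 ≤ r)
    (hq : q.HolderConjugate q') (hq2 : 2 < q)
    (hadm : 2 / q + (d : ℝ) / r = ((d : ℝ) + a + 1) / 2) :
    ∃ C > (0 : ℝ), ∀ Φ : (Fin d → ℝ) → ℝ → ℂ, IsBoundaryDatum Φ → ∀ z,
      mixNorm d q r (fun x t => ThetaStar d a Φ (x, z) t)
        ≤ ENNReal.ofReal C * mixNorm d q' r' Φ := by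
  obtain ⟨C, hC, hHLS⟩ := exists_lintegral_abs_sub_rpow_mul_le hq hq2
  have hK : 0 < boundaryKernelConst a * dispersiveConst d r :=
    mul_pos (boundaryKernelConst_pos ha) (dispersiveConst_pos hr2)
  refine ⟨boundaryKernelConst a * dispersiveConst d r * C, by positivity, fun Φ hΦ z => ?_⟩
  rw [mixNorm_eq, mixNorm_eq, ENNReal.ofReal_mul hK.le, mul_assoc]
  calc _ ≤ (∫⁻ t, (ENNReal.ofReal (boundaryKernelConst a * dispersiveConst d r) *
        ∫⁻ τ, ENNReal.ofReal (|t - τ| ^ (-(2 / q))) * sliceNorm r' Φ τ) ^ q) ^ (1 / q) := by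
        gcongr with t
        exact sliceNorm_ThetaStar_le ha hr hr2 hadm hΦ z t
    _ = ENNReal.ofReal (boundaryKernelConst a * dispersiveConst d r) * (∫⁻ t,
        (∫⁻ τ, ENNReal.ofReal (|t - τ| ^ (-(2 / q))) * sliceNorm r' Φ τ) ^ q) ^ (1 / q) :=
        lintegral_const_mul_rpow_one_div hq.pos ENNReal.ofReal_ne_top _
    _ ≤ _ := by
        gcongr
        exact hHLS _ (measurable_sliceNorm hΦ.measurable r')

end BoundaryTrace

section BoundaryEnergy

variable {d : ℕ} {a δ q q' r r' : ℝ} {Φ : (Fin d → ℝ) → ℝ → ℂ}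

/-- The Gaussian damping `e^{-δ(|x|² + z²)} dω_a` of the weighted measure on the half-space. -/
def dampedHalfSpaceMeasure (d : ℕ) (a δ : ℝ) : Measure ((Fin d → ℝ) × ℝ) :=
  dampedMeasure (ωa d a) (fun X => euclideanSq X.1 + X.2 ^ 2) δ

instance : SFinite (ωa d a) := by
  rw [ωa_eq_prod]
  infer_instance

instance : SFinite (dampedHalfSpaceMeasure d a δ) := by
  unfold dampedHalfSpaceMeasure
  infer_instance

theorem dampedHalfSpaceMeasure_eq_prod (d : ℕ) (a δ : ℝ) :
    dampedHalfSpaceMeasure d a δ = (dampedMeasure volume euclideanSq δ).prod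
      (dampedMeasure (halfLineMeasure a) (· ^ 2) δ) := by
  rw [dampedMeasure_prod measurable_euclideanSq (by fun_prop), ← ωa_eq_prod]
  rfl

theorem integral_boundaryDuhamel_mul_conj (a δ : ℝ) (Φ : (Fin d → ℝ) → ℝ → ℂ) (t τ τ' : ℝ) :
    ∫ X, boundaryDuhamel a Φ t X τ * starRingEnd ℂ (boundaryDuhamel a Φ t X τ')
        ∂dampedHalfSpaceMeasure d a δ
      = (∫ x, freePropagator d (t - τ) (fun y => Φ y τ) x *
          starRingEnd ℂ (freePropagator d (t - τ') (fun y => Φ y τ') x)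
            ∂dampedMeasure volume euclideanSq δ) *
        ∫ z, Sa0 a z (t - τ) * starRingEnd ℂ (Sa0 a z (t - τ'))
          ∂dampedMeasure (halfLineMeasure a) (· ^ 2) δ := by
  rw [dampedHalfSpaceMeasure_eq_prod, ← integral_prod_mul]
  congr with X
  simp only [boundaryDuhamel, map_mul]
  ring

theorem enorm_integral_boundaryDuhamel_mul_conj_le (ha : -1 < a) (hδ : 0 < δ)
    (hr : r.HolderConjugate r') (hr2 : 2 ≤ r)
    (hadm : 2 / q + (d : ℝ) / r = ((d : ℝ) + a + 1) / 2) (hΦ : IsBoundaryDatum Φ) (t : ℝ)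
    {τ τ' : ℝ} (hττ' : τ ≠ τ') :
    ‖∫ X, boundaryDuhamel a Φ t X τ * starRingEnd ℂ (boundaryDuhamel a Φ t X τ')
        ∂dampedHalfSpaceMeasure d a δ‖ₑ
      ≤ ENNReal.ofReal (boundaryDispersiveConst a * dispersiveConst d r) *
        (ENNReal.ofReal (|τ - τ'| ^ (-(2 / q))) * (sliceNorm r' Φ τ * sliceNorm r' Φ τ')) := by
  rcases eq_or_ne t τ with rfl | hτ
  · simp only [boundaryDuhamel_self ha, zero_mul, integral_zero, enorm_zero, zero_le]
  rcases eq_or_ne t τ' with rfl | hτ'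
  · simp only [boundaryDuhamel_self ha, map_zero, mul_zero, integral_zero, enorm_zero, zero_le]
  have hs := sub_ne_zero.2 hτ
  have hs' := sub_ne_zero.2 hτ'
  have hss' : t - τ ≠ t - τ' := fun h => hττ' (sub_right_injective h)
  have habs : |t - τ - (t - τ')| = |τ - τ'| := by rw [sub_sub_sub_cancel_left, abs_sub_comm]
  have hx := enorm_integral_freePropagator_mul_conj_le hδ hs hs' hss' hr hr2
    (hΦ.integrable τ) (hΦ.integrable τ')
  have hz := ENNReal.ofReal_le_ofReal (norm_integral_Sa0_mul_conj_le ha hδ hs hs' hss')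
  rw [ofReal_norm] at hz
  rw [habs] at hx hz
  have hK := boundaryDispersiveConst_pos ha
  have hD := dispersiveConst_pos (d := d) hr2
  rw [integral_boundaryDuhamel_mul_conj, enorm_mul]
  refine (mul_le_mul' hx hz).trans_eq ?_
  rw [← rpow_mul_rpow_of_admissible hadm (abs_pos.2 (sub_ne_zero.2 hττ')),
    mul_right_comm, ← ENNReal.ofReal_mul (by positivity),
    ← mul_assoc (ENNReal.ofReal _) (ENNReal.ofReal _), ← ENNReal.ofReal_mul (by positivity)]
  congr 2
  ring

theorem lintegral_enorm_boundaryDuhamel_rpow_two_le (ha : -1 < a) (hδ : 0 < δ) {τ : ℝ}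
    (hΦ : Integrable fun y => Φ y τ) (t : ℝ) :
    (∫⁻ X, ‖boundaryDuhamel a Φ t X τ‖ₑ ^ (2 : ℝ) ∂dampedHalfSpaceMeasure d a δ) ^ (1 / (2 : ℝ))
      ≤ ENNReal.ofReal (boundaryKernelConst a * |t - τ| ^ (-((a + 1) / 2))) *
        ((∫⁻ y, ‖Φ y τ‖ₑ ^ (2 : ℝ)) *
          dampedMeasure (halfLineMeasure a) (· ^ 2) δ Set.univ) ^ (1 / (2 : ℝ)) := by
  rcases eq_or_ne t τ with rfl | hτ
  · simp only [boundaryDuhamel_self ha, enorm_zero, ENNReal.zero_rpow_of_pos two_pos,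
      lintegral_zero, ENNReal.zero_rpow_of_pos one_half_pos, zero_le]
  simp only [enorm_boundaryDuhamel ha]
  rw [lintegral_const_mul_rpow_one_div two_pos ENNReal.ofReal_ne_top,
    dampedHalfSpaceMeasure_eq_prod]
  gcongr
  have hmeas : Measurable fun x => ‖freePropagator d (t - τ) (fun y => Φ y τ) x‖ₑ ^ (2 : ℝ) :=
    (continuous_freePropagator hΦ _).measurable.enorm.pow_const 2
  have hprod := lintegral_prod_mul (μ := dampedMeasure volume euclideanSq δ)
    (ν := dampedMeasure (halfLineMeasure a) (· ^ 2) δ) hmeas.aemeasurable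
    (aemeasurable_const (b := (1 : ℝ≥0∞)))
  rw [lintegral_one] at hprod
  simp only [mul_one] at hprod
  rw [hprod]
  have hL2 := (lintegral_mono' (dampedMeasure_le euclideanSq_nonneg hδ.le) le_rfl).trans
    (lintegral_enorm_freePropagator_rpow_two_le (sub_ne_zero.2 hτ) hΦ)
  exact mul_le_mul_left hL2 _

theorem lintegral_lintegral_enorm_boundaryDuhamel_ne_top (ha : -1 < a) (ha1 : a < 1) (hδ : 0 < δ)
    (hΦ : IsBoundaryDatum Φ) (t : ℝ) :
    ∫⁻ X, (∫⁻ τ in Set.uIoc 0 t, ‖boundaryDuhamel a Φ t X τ‖ₑ) ^ (2 : ℝ)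
      ∂dampedHalfSpaceMeasure d a δ ≠ ⊤ := by
  obtain ⟨B, hB, hΦB⟩ := hΦ.exists_lintegral_rpow_two_le
  have := isFiniteMeasure_dampedMeasure_halfLineMeasure ha hδ
  let M : ℝ≥0∞ := (B * dampedMeasure (halfLineMeasure a) (· ^ 2) δ Set.univ) ^ (1 / (2 : ℝ))
  have hM : M ≠ ⊤ := ENNReal.rpow_ne_top_of_nonneg (by positivity)
    (ENNReal.mul_ne_top hB (measure_ne_top _ _))
  have hK := boundaryKernelConst_pos ha
  refine ne_of_lt ((ENNReal.rpow_lt_top_iff_of_pos (one_half_pos (α := ℝ))).1 ?_)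
  calc (∫⁻ X, (∫⁻ τ in Set.uIoc 0 t, ‖boundaryDuhamel a Φ t X τ‖ₑ) ^ (2 : ℝ)
        ∂dampedHalfSpaceMeasure d a δ) ^ (1 / (2 : ℝ))
      ≤ ∫⁻ τ in Set.uIoc 0 t, (∫⁻ X, ‖boundaryDuhamel a Φ t X τ‖ₑ ^ (2 : ℝ)
          ∂dampedHalfSpaceMeasure d a δ) ^ (1 / (2 : ℝ)) :=
        lintegral_rpow_lintegral_le one_le_two
          (measurable_boundaryDuhamel hΦ.measurable a t).enorm
    _ ≤ ∫⁻ τ in Set.uIoc 0 t,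
          ENNReal.ofReal (boundaryKernelConst a * |t - τ| ^ (-((a + 1) / 2))) * M := by
        gcongr with τ
        refine (lintegral_enorm_boundaryDuhamel_rpow_two_le ha hδ (hΦ.integrable τ) t).trans ?_
        gcongr
        exact ENNReal.rpow_le_rpow (mul_le_mul_left (hΦB τ) _) one_half_pos.le
    _ = ENNReal.ofReal (boundaryKernelConst a) *
          (∫⁻ τ in Set.uIoc 0 t, ENNReal.ofReal (|t - τ| ^ (-((a + 1) / 2)))) * M := by
        simp only [ENNReal.ofReal_mul hK.le]
        rw [lintegral_mul_const' _ _ hM, lintegral_const_mul' _ _ ENNReal.ofReal_ne_top]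
    _ < ⊤ := by
        have hlt := setLIntegral_uIoc_abs_sub_rpow_lt_top (show (a + 1) / 2 < 1 by linarith) 0 t
        exact ENNReal.mul_lt_top (ENNReal.mul_lt_top ENNReal.ofReal_lt_top hlt) hM.lt_top

theorem lintegral_enorm_ThetaStar_rpow_two_le (ha : -1 < a) (ha1 : a < 1)
    (hr : r.HolderConjugate r') (hr2 : 2 ≤ r)
    (hadm : 2 / q + (d : ℝ) / r = ((d : ℝ) + a + 1) / 2) (hΦ : IsBoundaryDatum Φ) (t : ℝ) :
    ∫⁻ X, ‖ThetaStar d a Φ X t‖ₑ ^ (2 : ℝ) ∂ωa d a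
      ≤ ENNReal.ofReal (boundaryDispersiveConst a * dispersiveConst d r) *
        ∫⁻ τ, ∫⁻ τ', ENNReal.ofReal (|τ - τ'| ^ (-(2 / q))) *
          (sliceNorm r' Φ τ * sliceNorm r' Φ τ') := by
  have hD := measurable_boundaryDuhamel hΦ.measurable a t
  simp only [enorm_ThetaStar]
  refine lintegral_le_of_forall_dampedMeasure_le (w := fun X => euclideanSq X.1 + X.2 ^ 2)
    ((measurable_euclideanSq.comp measurable_fst).add (by fun_prop))
    (hD.stronglyMeasurable.integral_prod_right.measurable.enorm.pow_const 2) fun δ hδ => ?_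
  calc ∫⁻ X, ‖∫ τ in Set.uIoc 0 t, boundaryDuhamel a Φ t X τ‖ₑ ^ (2 : ℝ)
        ∂dampedHalfSpaceMeasure d a δ
      ≤ ∫⁻ τ in Set.uIoc 0 t, ∫⁻ τ' in Set.uIoc 0 t,
          ‖∫ X, boundaryDuhamel a Φ t X τ * starRingEnd ℂ (boundaryDuhamel a Φ t X τ')
            ∂dampedHalfSpaceMeasure d a δ‖ₑ :=
        lintegral_enorm_integral_rpow_two_le hD
          (lintegral_lintegral_enorm_boundaryDuhamel_ne_top ha ha1 hδ hΦ t)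
    _ ≤ ∫⁻ τ, ∫⁻ τ', ‖∫ X, boundaryDuhamel a Φ t X τ *
          starRingEnd ℂ (boundaryDuhamel a Φ t X τ') ∂dampedHalfSpaceMeasure d a δ‖ₑ :=
        (setLIntegral_le_lintegral _ _).trans
          (lintegral_mono fun τ => setLIntegral_le_lintegral _ _)
    _ ≤ ∫⁻ τ, ∫⁻ τ', ENNReal.ofReal (boundaryDispersiveConst a * dispersiveConst d r) *
          (ENNReal.ofReal (|τ - τ'| ^ (-(2 / q))) * (sliceNorm r' Φ τ * sliceNorm r' Φ τ')) := by
        refine lintegral_mono fun τ => lintegral_mono_ae ?_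
        filter_upwards [Measure.ae_ne volume τ] with τ' hτ'
        exact enorm_integral_boundaryDuhamel_mul_conj_le ha hδ hr hr2 hadm hΦ t hτ'.symm
    _ = _ := by
        simp only [lintegral_const_mul' _ _ ENNReal.ofReal_ne_top]

theorem exists_eLpNorm_ThetaStar_le (ha : -1 < a) (hr : r.HolderConjugate r') (hr2 : 2 ≤ r)
    (hq : q.HolderConjugate q') (hq2 : 2 < q)
    (hadm : 2 / q + (d : ℝ) / r = ((d : ℝ) + a + 1) / 2) :
    ∃ C > (0 : ℝ), ∀ Φ : (Fin d → ℝ) → ℝ → ℂ, IsBoundaryDatum Φ → ∀ t,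
      eLpNorm (fun X => ThetaStar d a Φ X t) 2 (ωa d a)
        ≤ ENNReal.ofReal C * mixNorm d q' r' Φ := by
  obtain ⟨C, hC, hHLS⟩ := exists_lintegral_lintegral_abs_sub_rpow_mul_mul_le hq hq2
  have hK : 0 < boundaryDispersiveConst a * dispersiveConst d r :=
    mul_pos (boundaryDispersiveConst_pos ha) (dispersiveConst_pos hr2)
  refine ⟨(boundaryDispersiveConst a * dispersiveConst d r * C) ^ (1 / 2 : ℝ), by positivity,
    fun Φ hΦ t => ?_⟩
  have hsq : ∫⁻ X, ‖ThetaStar d a Φ X t‖ₑ ^ (2 : ℝ) ∂ωa d a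
      ≤ ENNReal.ofReal (boundaryDispersiveConst a * dispersiveConst d r * C) *
        mixNorm d q' r' Φ ^ (2 : ℝ) := by
    refine (lintegral_enorm_ThetaStar_rpow_two_le ha
      (lt_one_of_admissible hr2 hq2 hadm) hr hr2 hadm hΦ t).trans ?_
    rw [ENNReal.ofReal_mul hK.le, mul_assoc, mixNorm_eq, ENNReal.rpow_two]
    gcongr
    exact hHLS _ (measurable_sliceNorm hΦ.measurable r')
  rw [eLpNorm_eq_lintegral_rpow_enorm_toReal two_ne_zero ENNReal.ofNat_ne_top,
    ENNReal.toReal_ofNat, ← ENNReal.ofReal_rpow_of_pos (by positivity)]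
  refine (ENNReal.rpow_le_rpow hsq (by positivity)).trans_eq ?_
  rw [ENNReal.mul_rpow_of_nonneg _ _ (by positivity), ← ENNReal.rpow_mul,
    mul_one_div_cancel two_ne_zero, ENNReal.rpow_one]

end BoundaryEnergy

section SchwartzData

theorem exists_norm_schwartzMap_apply_le {E F G : Type*} [NormedAddCommGroup E] [NormedSpace ℝ E]
    [NormedAddCommGroup F] [NormedSpace ℝ F] [NormedAddCommGroup G] [NormedSpace ℝ G]
    (Φ : SchwartzMap (E × F) G) (k : ℕ) :
    ∃ M, 0 ≤ M ∧ ∀ y τ, ‖Φ (y, τ)‖ ≤ M * (1 + ‖y‖) ^ (-(k : ℝ)) := by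
  refine ⟨2 ^ k * (Finset.Iic (k, 0)).sup (fun m => SchwartzMap.seminorm ℝ m.1 m.2) Φ,
    by positivity, fun y τ => ?_⟩
  have hdecay := SchwartzMap.one_add_le_sup_seminorm_apply (𝕜 := ℝ) (m := (k, 0)) le_rfl le_rfl Φ
    (y, τ)
  rw [norm_iteratedFDeriv_zero] at hdecay
  rw [Real.rpow_neg (by positivity), Real.rpow_natCast, ← div_eq_mul_inv,
    le_div_iff₀ (by positivity), mul_comm]
  refine le_trans ?_ hdecay
  gcongr
  exact norm_fst_le (y, τ)

theorem isBoundaryDatum_schwartzMap {d : ℕ} (Φ : SchwartzMap ((Fin d → ℝ) × ℝ) ℂ) :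
    IsBoundaryDatum fun y τ => Φ (y, τ) := by
  obtain ⟨M, hM, hΦ⟩ := exists_norm_schwartzMap_apply_le Φ (d + 1)
  let bound : (Fin d → ℝ) → ℝ := fun y => M * (1 + ‖y‖) ^ (-((d + 1 : ℕ) : ℝ))
  have hbound : Integrable bound := (integrable_one_add_norm (by simp)).const_mul M
  have hslice : ∀ τ, Continuous fun y => Φ (y, τ) := fun τ => Φ.continuous.comp (by fun_prop)
  refine ⟨Φ.continuous.measurable,
    fun τ => hbound.mono' (hslice τ).aestronglyMeasurable (.of_forall fun y => hΦ y τ),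
    ∫⁻ y, ENNReal.ofReal (M * bound y), (hbound.const_mul M).lintegral_lt_top.ne,
    fun τ => lintegral_mono fun y => ?_⟩
  have hle : ‖Φ (y, τ)‖ ≤ M := (hΦ y τ).trans <| mul_le_of_le_one_right hM <|
    Real.rpow_le_one_of_one_le_of_nonpos (by linarith [norm_nonneg y])
      (neg_nonpos.2 (Nat.cast_nonneg _))
  rw [ENNReal.rpow_two, ← ofReal_norm, ← ENNReal.ofReal_pow (norm_nonneg _), sq]
  exact ENNReal.ofReal_le_ofReal (mul_le_mul hle (hΦ y τ) (norm_nonneg _) hM)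

end SchwartzData

theorem boundary_strichartz_general {d : ℕ} {a q q' r r' : ℝ} (ha : -1 < a)
    (hr : r.HolderConjugate r') (hr2 : 2 ≤ r) (hq : q.HolderConjugate q') (hq2 : 2 < q)
    (hadm : 2 / q + (d : ℝ) / r = ((d : ℝ) + a + 1) / 2) :
    ∃ C > (0 : ℝ), ∀ Φ : (Fin d → ℝ) → ℝ → ℂ, IsBoundaryDatum Φ →
      (∀ t, eLpNorm (fun X => ThetaStar d a Φ X t) 2 (ωa d a)
        ≤ ENNReal.ofReal C * mixNorm d q' r' Φ) ∧
      ∀ z, mixNorm d q r (fun x t => ThetaStar d a Φ (x, z) t)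
        ≤ ENNReal.ofReal C * mixNorm d q' r' Φ := by
  obtain ⟨C₁, hC₁, henergy⟩ := exists_eLpNorm_ThetaStar_le ha hr hr2 hq hq2 hadm
  obtain ⟨C₂, -, htrace⟩ := exists_mixNorm_ThetaStar_le ha hr hr2 hq hq2 hadm
  refine ⟨max C₁ C₂, lt_max_of_lt_left hC₁, fun Φ hΦ => ⟨fun t => ?_, fun z => ?_⟩⟩
  · refine (henergy Φ hΦ t).trans ?_
    gcongr
    exact le_max_left _ _
  · refine (htrace Φ hΦ z).trans ?_
    gcongr
    exact le_max_right _ _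

/-- Boundary Strichartz estimates: for `-1 < a < 1`, `r ≥ 2`, `q > 2` with
`2/q + d/r = (d+a+1)/2`, there is `C > 0` such that for every Schwartz `Φ`:
(i) `sup_t ‖Θ_a^*(Φ)(·,t)‖_{L²_a} ≤ C ‖Φ‖_{L^{q'}_t L^{r'}_x}`, and
(ii) `sup_{z>0} ‖Θ_a^*(Φ)(·,z,·)‖_{L^q_t L^r_x} ≤ C ‖Φ‖_{L^{q'}_t L^{r'}_x}`. -/
theorem boundary_strichartz
    (d : ℕ) (hd : 1 ≤ d) (a : ℝ) (ha₁ : -1 < a) (ha₂ : a < 1)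
    (q r : ℝ) (hr : 2 ≤ r) (hq : 2 < q)
    (hadm : 2 / q + (d : ℝ) / r = ((d : ℝ) + a + 1) / 2) :
    ∃ C > (0 : ℝ), ∀ Φ : SchwartzMap ((Fin d → ℝ) × ℝ) ℂ,
      (⨆ t : ℝ,
          eLpNorm (fun X => ThetaStar d a (fun y τ => Φ (y, τ)) X t) 2 (ωa d a))
        ≤ ENNReal.ofReal C *
            mixNorm d (q / (q - 1)) (r / (r - 1)) (fun y τ => Φ (y, τ)) ∧
      (⨆ (z : ℝ) (_ : 0 < z),
          mixNorm d q r (fun x t => ThetaStar d a (fun y τ => Φ (y, τ)) (x, z) t))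
        ≤ ENNReal.ofReal C *
            mixNorm d (q / (q - 1)) (r / (r - 1)) (fun y τ => Φ (y, τ)) := by
  obtain ⟨C, hC, hΘ⟩ := boundary_strichartz_general ha₁ (.conjExponent (by linarith)) hr
    (.conjExponent (by linarith)) hq hadm
  refine ⟨C, hC, fun Φ => ?_⟩
  obtain ⟨henergy, htrace⟩ := hΘ _ (isBoundaryDatum_schwartzMap Φ)
  exact ⟨iSup_le henergy, iSup₂_le fun z _ => htrace z⟩

end
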